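/- arXiv:math/0610384 — 2 statements merged into one kernel-verified Lean document; each statement's English description precedes it below -/
import Mathlib

section
/- Let G be a finite simple graph in which every vertex has degree 2 or 3, and suppose G has no connected component with exactly 5 vertices. Then λ(G) ≥ v(G)/4. -/
/-- `H` is a path with `k` edges (a "k-edge path"), as a subgraph of `G`. -/
def SimpleGraph.Subgraph.IsKEdgePath {V : Type*} {G : SimpleGraph V}
    (H : G.Subgraph) (k : ℕ) : Prop :=
  ∃ (u v : V) (w : G.Walk u v), w.IsPath ∧ w.length = k ∧ H = w.toSubgraph

/-- `H` is a tree with `k` edges (a "k-edge tree"), as a subgraph of `G`. -/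
def SimpleGraph.Subgraph.IsKEdgeTree {V : Type*} {G : SimpleGraph V}
    (H : G.Subgraph) (k : ℕ) : Prop :=
  H.coe.IsTree ∧ H.edgeSet.ncard = k

/-- The maximum number of pairwise vertex-disjoint `k`-edge paths in `G`. -/
noncomputable def SimpleGraph.lambdaK {V : Type*} (G : SimpleGraph V) (k : ℕ) : ℕ :=
  sSup {n | ∃ P : Finset G.Subgraph,
    (∀ H ∈ P, H.IsKEdgePath k) ∧
    (P : Set G.Subgraph).Pairwise (fun H H' => Disjoint H.verts H'.verts) ∧
    P.card = n}

/-- The maximum number of pairwise vertex-disjoint `k`-edge trees in `G`. -/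
noncomputable def SimpleGraph.tauK {V : Type*} (G : SimpleGraph V) (k : ℕ) : ℕ :=
  sSup {n | ∃ P : Finset G.Subgraph,
    (∀ H ∈ P, H.IsKEdgeTree k) ∧
    (P : Set G.Subgraph).Pairwise (fun H H' => Disjoint H.verts H'.verts) ∧
    P.card = n}


namespace Pk
open Finset Classical

def IsP3 {V : Type} (G : SimpleGraph V) (t : Finset V) : Prop :=
  ∃ a b c, G.Adj a b ∧ G.Adj b c ∧ a ≠ c ∧ t = {a, b, c}

def HP {V : Type} (G : SimpleGraph V) (S : Finset V) (k : ℕ) : Prop :=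
  ∃ P : Finset (Finset V), (∀ t ∈ P, IsP3 G t ∧ t ⊆ S) ∧
    (∀ t ∈ P, ∀ t' ∈ P, t ≠ t' → Disjoint t t') ∧ P.card = k

noncomputable def nb {V : Type} (G : SimpleGraph V) (S : Finset V) (v : V) : Finset V :=
  S.filter (fun w => G.Adj v w)

def TT {V : Type} (G : SimpleGraph V) (S : Finset V) : Prop :=
  ∀ v ∈ S, (nb G S v).card = 2 ∨ (nb G S v).card = 3

def Closed {V : Type} (G : SimpleGraph V) (S C : Finset V) : Prop :=
  C ⊆ S ∧ ∀ u ∈ C, ∀ w ∈ S, G.Adj u w → w ∈ C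

variable {V : Type} {G : SimpleGraph V} {S T : Finset V}

lemma mem_nb {v w : V} : w ∈ nb G S v ↔ w ∈ S ∧ G.Adj v w := by simp [nb]

lemma IsP3.nonempty {t : Finset V} (h : IsP3 G t) : t.Nonempty := by
  obtain ⟨a, b, c, _, _, _, rfl⟩ := h
  exact ⟨a, by simp⟩

lemma HP.mono {k : ℕ} (h : HP G S k) (hs : S ⊆ T) : HP G T k := by
  obtain ⟨P, h1, h2, h3⟩ := h
  exact ⟨P, fun t ht => ⟨(h1 t ht).1, (h1 t ht).2.trans hs⟩, h2, h3⟩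

lemma HP.zero : HP G S 0 := ⟨∅, by simp, by simp, by simp⟩

lemma HP.union {a b : ℕ} (h : HP G S a) (h' : HP G T b) (hd : Disjoint S T) :
    HP G (S ∪ T) (a + b) := by
  obtain ⟨P, h1, h2, h3⟩ := h
  obtain ⟨Q, g1, g2, g3⟩ := h'
  have key : ∀ t ∈ P, ∀ t' ∈ Q, Disjoint t t' := fun t ht t' ht' =>
    Finset.disjoint_of_subset_left (h1 t ht).2 (Finset.disjoint_of_subset_right (g1 t' ht').2 hd)
  refine ⟨P ∪ Q, ?_, ?_, ?_⟩
  · intro t ht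
    rcases Finset.mem_union.1 ht with h | h
    · exact ⟨(h1 t h).1, (h1 t h).2.trans subset_union_left⟩
    · exact ⟨(g1 t h).1, (g1 t h).2.trans subset_union_right⟩
  · intro t ht t' ht' hne
    rcases Finset.mem_union.1 ht with h | h <;> rcases Finset.mem_union.1 ht' with h' | h'
    · exact h2 t h t' h' hne
    · exact key t h t' h'
    · exact (key t' h' t h).symm
    · exact g2 t h t' h' hne
  · rw [Finset.card_union_of_disjoint, h3, g3]
    rw [Finset.disjoint_left]
    intro t ht ht'
    have := key t ht t ht'
    rw [disjoint_self] at this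
    exact (h1 t ht).1.nonempty.ne_empty this

lemma HP.one {a b c : V} (h1 : G.Adj a b) (h2 : G.Adj b c) (h3 : a ≠ c) (ha : a ∈ S) (hb : b ∈ S)
    (hc : c ∈ S) : HP G S 1 := by
  refine ⟨{{a, b, c}}, ?_, ?_, by simp⟩
  · intro t ht
    rw [Finset.mem_singleton] at ht
    subst ht
    exact ⟨⟨a, b, c, h1, h2, h3, rfl⟩, by intro x; simp; grind⟩
  · intro t ht t' ht' hne
    simp at ht ht'
    grind

lemma HP.two {a b c d e f : V} (h1 : G.Adj a b) (h2 : G.Adj b c) (h3 : a ≠ c)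
    (h4 : G.Adj d e) (h5 : G.Adj e f) (h6 : d ≠ f)
    (hS : ({a, b, c} : Finset V) ⊆ S) (hT : ({d, e, f} : Finset V) ⊆ S)
    (hd : Disjoint ({a, b, c} : Finset V) {d, e, f}) : HP G S 2 := by
  have A : HP G ({a, b, c} : Finset V) 1 := HP.one h1 h2 h3 (by simp) (by simp) (by simp)
  have B : HP G ({d, e, f} : Finset V) 1 := HP.one h4 h5 h6 (by simp) (by simp) (by simp)
  exact (A.union B hd).mono (Finset.union_subset hS hT)

/-- lifting through an added edge -/
lemma HP.lift {W : Finset V} {x y : V} {k : ℕ} (h : HP (G ⊔ SimpleGraph.edge x y) S k)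
    (hW : Disjoint S W) (h1 : HP G W 1)
    (h2 : ∀ w ∈ S, w ≠ x → w ≠ y → G.Adj x w ∨ G.Adj y w → HP G (W ∪ {x, y, w}) 2) :
    HP G (S ∪ W) (k + 1) := by
  obtain ⟨P, p1, p2, p3⟩ := h
  by_cases hg : ∀ t ∈ P, IsP3 G t
  · exact HP.union ⟨P, fun t ht => ⟨hg t ht, (p1 t ht).2⟩, p2, p3⟩ h1 hW
  push Not at hg
  obtain ⟨t, ht, hbad⟩ := hg
  have hw : ∃ w, w ≠ x ∧ w ≠ y ∧ (G.Adj x w ∨ G.Adj y w) ∧ t = {x, y, w} := by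
    obtain ⟨a, b, c, hab, hbc, hac, rfl⟩ := (p1 t ht).1
    simp only [SimpleGraph.sup_adj, SimpleGraph.edge_adj] at hab hbc
    by_cases q1 : G.Adj a b
    · by_cases q2 : G.Adj b c
      · exact absurd ⟨a, b, c, q1, q2, hac, rfl⟩ hbad
      · have e := hbc.resolve_left q2
        refine ⟨a, ?_⟩
        rcases e.1 with ⟨rfl, rfl⟩ | ⟨rfl, rfl⟩
        · exact ⟨q1.ne, hac, Or.inl q1.symm, by ext; simp; tauto⟩
        · exact ⟨hac, q1.ne, Or.inr q1.symm, by ext; simp; tauto⟩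
    · have e := hab.resolve_left q1
      by_cases q2 : G.Adj b c
      · refine ⟨c, ?_⟩
        rcases e.1 with ⟨rfl, rfl⟩ | ⟨rfl, rfl⟩
        · exact ⟨hac.symm, q2.ne.symm, Or.inr q2, by ext; simp⟩
        · exact ⟨q2.ne.symm, hac.symm, Or.inl q2, by ext; simp; tauto⟩
      · have e' := hbc.resolve_left q2
        exfalso
        clear h2 p1 p2 hW hbad
        grind
  obtain ⟨w, hwx, hwy, hadj, htw⟩ := hw
  have htS := (p1 t ht).2
  have hwS : w ∈ S := htS (by simp [htw])
  have g2 := h2 w hwS hwx hwy hadj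
  have g1 : HP G (S \ t) (k - 1) := by
    refine ⟨P.erase t, ?_, ?_, ?_⟩
    · intro t' ht'
      have hne := Finset.ne_of_mem_erase ht'
      have hm := Finset.mem_of_mem_erase ht'
      have hdis := p2 t' hm t ht hne
      have hx : x ∉ t' := fun hx => (Finset.disjoint_left.1 hdis hx) (by simp [htw])
      have hy : y ∉ t' := fun hx => (Finset.disjoint_left.1 hdis hx) (by simp [htw])
      refine ⟨?_, ?_⟩
      · obtain ⟨a, b, c, hab, hbc, hac, rfl⟩ := (p1 t' hm).1
        simp only [SimpleGraph.sup_adj, SimpleGraph.edge_adj] at hab hbc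
        refine ⟨a, b, c, ?_, ?_, hac, rfl⟩ <;> grind
      · intro u hu
        exact Finset.mem_sdiff.2 ⟨(p1 t' hm).2 hu, fun h => Finset.disjoint_left.1 hdis hu h⟩
    · intro a ha b hb
      exact p2 a (Finset.mem_of_mem_erase ha) b (Finset.mem_of_mem_erase hb)
    · rw [Finset.card_erase_of_mem ht, p3]
  have hpos : 0 < k := by rw [← p3]; exact Finset.card_pos.2 ⟨t, ht⟩
  have hd : Disjoint (S \ t) (W ∪ {x, y, w}) := by
    rw [Finset.disjoint_left] at hW ⊢
    intro u hu hu'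
    rw [← htw] at hu'
    grind
  have := g1.union g2 hd
  have e : k - 1 + 2 = k + 1 := by omega
  rw [e] at this
  refine this.mono ?_
  intro u hu
  rw [← htw] at hu
  grind

lemma three_conn {a b c : V} (hab : a ≠ b) (hac : a ≠ c) (hbc : b ≠ c)
    (ha : G.Adj a b ∨ G.Adj a c) (hb : G.Adj b a ∨ G.Adj b c) (hc : G.Adj c a ∨ G.Adj c b) :
    HP G {a, b, c} 1 := by
  have s1 := @SimpleGraph.adj_comm V G a b
  have s2 := @SimpleGraph.adj_comm V G a c
  have s3 := @SimpleGraph.adj_comm V G c b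
  by_cases h1 : G.Adj a b
  · by_cases h2 : G.Adj a c
    · exact HP.one h1.symm h2 hbc (by simp) (by simp) (by simp)
    · exact HP.one h1 (s3.1 (by grind)) hac (by simp) (by simp) (by simp)
  · exact HP.one (a := a) (b := c) (c := b) (by grind) (by grind) hab (by simp) (by simp) (by simp)

/-- a vertex with two distinct neighbours from the card bound -/
lemma two_nb {v : V} (h : 2 ≤ (nb G S v).card) :
    ∃ a b, a ≠ b ∧ a ∈ S ∧ b ∈ S ∧ G.Adj v a ∧ G.Adj v b := by
  obtain ⟨a, ha, b, hb, hne⟩ := Finset.one_lt_card.1 h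
  rw [mem_nb] at ha hb
  exact ⟨a, b, hne, ha.1, hb.1, ha.2, hb.2⟩

lemma nb2 {v : V} (h : (nb G S v).card = 2) :
    ∃ a b, a ≠ b ∧ a ∈ S ∧ b ∈ S ∧ G.Adj v a ∧ G.Adj v b ∧ ∀ w ∈ S, G.Adj v w → w = a ∨ w = b := by
  obtain ⟨a, b, hne, he⟩ := Finset.card_eq_two.1 h
  have ha : a ∈ nb G S v := by simp [he]
  have hb : b ∈ nb G S v := by simp [he]
  rw [mem_nb] at ha hb
  refine ⟨a, b, hne, ha.1, hb.1, ha.2, hb.2, fun w hw hv => ?_⟩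
  have : w ∈ nb G S v := mem_nb.2 ⟨hw, hv⟩
  simpa [he] using this

lemma nb2' {v a : V} (h : (nb G S v).card = 2) (haS : a ∈ S) (ha : G.Adj v a) :
    ∃ b, b ≠ a ∧ b ∈ S ∧ G.Adj v b ∧ ∀ w ∈ S, G.Adj v w → w = a ∨ w = b := by
  obtain ⟨p, q, h1, h2, h3, h4, h5, h6⟩ := nb2 h
  rcases h6 a haS ha with rfl | rfl
  · exact ⟨q, h1.symm, h3, h5, h6⟩
  · exact ⟨p, h1, h2, h4, fun w hw hv => (h6 w hw hv).symm⟩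

lemma nb2'' {v a b : V} (h : (nb G S v).card = 2) (haS : a ∈ S) (ha : G.Adj v a)
    (hbS : b ∈ S) (hb : G.Adj v b) (hne : a ≠ b) :
    ∀ w ∈ S, G.Adj v w → w = a ∨ w = b := by
  obtain ⟨p, h1, h2, h4, h6⟩ := nb2' h haS ha
  rcases h6 b hbS hb with rfl | rfl
  · exact absurd rfl hne
  · exact h6

lemma nb3 {v : V} (h : (nb G S v).card = 3) :
    ∃ a b c, a ≠ b ∧ a ≠ c ∧ b ≠ c ∧ a ∈ S ∧ b ∈ S ∧ c ∈ S ∧ G.Adj v a ∧ G.Adj v b ∧ G.Adj v c ∧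
      ∀ w ∈ S, G.Adj v w → w = a ∨ w = b ∨ w = c := by
  obtain ⟨a, b, c, h1, h2, h3, he⟩ := Finset.card_eq_three.1 h
  have ha : a ∈ nb G S v := by simp [he]
  have hb : b ∈ nb G S v := by simp [he]
  have hc : c ∈ nb G S v := by simp [he]
  rw [mem_nb] at ha hb hc
  refine ⟨a, b, c, h1, h2, h3, ha.1, hb.1, hc.1, ha.2, hb.2, hc.2, fun w hw hv => ?_⟩
  have : w ∈ nb G S v := mem_nb.2 ⟨hw, hv⟩
  simpa [he] using this

lemma nb3' {v a : V} (h : (nb G S v).card = 3) (haS : a ∈ S) (ha : G.Adj v a) :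
    ∃ b c, a ≠ b ∧ a ≠ c ∧ b ≠ c ∧ b ∈ S ∧ c ∈ S ∧ G.Adj v b ∧ G.Adj v c ∧
      ∀ w ∈ S, G.Adj v w → w = a ∨ w = b ∨ w = c := by
  obtain ⟨p, q, r, h1, h2, h3, h4, h5, h6, h7, h8, h9, h10⟩ := nb3 h
  rcases h10 a haS ha with rfl | rfl | rfl
  · exact ⟨q, r, h1, h2, h3, h5, h6, h8, h9, h10⟩
  · exact ⟨p, r, h1.symm, h3, h2, h4, h6, h7, h9, by grind⟩
  · exact ⟨p, q, h2.symm, h3.symm, h1, h4, h5, h7, h8, by grind⟩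

lemma nb3'' {v a b : V} (h : (nb G S v).card = 3) (haS : a ∈ S) (ha : G.Adj v a)
    (hbS : b ∈ S) (hb : G.Adj v b) (hne : a ≠ b) :
    ∃ c, a ≠ c ∧ b ≠ c ∧ c ∈ S ∧ G.Adj v c ∧
      ∀ w ∈ S, G.Adj v w → w = a ∨ w = b ∨ w = c := by
  obtain ⟨p, q, h1, h2, h3, h4, h5, h6, h7, h8⟩ := nb3' h haS ha
  rcases h8 b hbS hb with rfl | rfl | rfl
  · exact absurd rfl hne
  · exact ⟨q, h2, h3, h5, h7, h8⟩
  · exact ⟨p, h1, h3.symm, h4, h6, by grind⟩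

structure Ctx [Fintype V] (G : SimpleGraph V) (S : Finset V) : Prop where
  tt : TT G S
  no5 : ∀ C, Closed G S C → C.card ≠ 5
  ih : ∀ (G' : SimpleGraph V) (S' Y' : Finset V),
    S'.card + G'.edgeSet.ncard < S.card + G.edgeSet.ncard → TT G' S' →
    (∀ C, Closed G' S' C → C.card = 5 → ∃ y ∈ C, y ∈ Y') →
    ∃ k, HP G' S' k ∧ S'.card ≤ 4 * k + Y'.card
  bad : ∀ k, HP G S k → 4 * k < S.card

variable [Fintype V]

lemma sdiff_TT (tt : TT G S) {W : Finset V} (hdeg : ∀ v ∈ S, v ∉ W → (∃ w ∈ W, G.Adj v w) →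
      (nb G S v).card = 3 ∧ ∃ w0, ∀ w ∈ W, G.Adj v w → w = w0) : TT G (S \ W) := by
  intro v hv
  rw [Finset.mem_sdiff] at hv
  have hsub : nb G (S \ W) v ⊆ nb G S v := by
    intro u hu; rw [mem_nb, Finset.mem_sdiff] at *; exact ⟨hu.1.1, hu.2⟩
  have hle := Finset.card_le_card hsub
  by_cases h : ∃ w ∈ W, G.Adj v w
  · obtain ⟨h3, w0, hw0⟩ := hdeg v hv.1 hv.2 h
    have : (nb G S v).erase w0 ⊆ nb G (S \ W) v := by
      intro u hu
      rw [Finset.mem_erase, mem_nb] at hu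
      rw [mem_nb, Finset.mem_sdiff]
      exact ⟨⟨hu.2.1, fun hW => hu.1 (hw0 u hW hu.2.2)⟩, hu.2.2⟩
    have h1 := Finset.card_le_card this
    have h2 := Finset.pred_card_le_card_erase (s := nb G S v) (a := w0)
    omega
  · have : nb G (S \ W) v = nb G S v := by
      apply Finset.Subset.antisymm hsub
      intro u hu
      rw [mem_nb] at hu
      rw [mem_nb, Finset.mem_sdiff]
      exact ⟨⟨hu.1, fun hW => h ⟨u, hW, hu.2⟩⟩, hu.2⟩
    rw [this]; exact tt v hv.1

lemma Ctx.rl0 (h : Ctx G S) {W Y : Finset V} {k : ℕ} (hWS : W ⊆ S) (hne : W.Nonempty) (hW : HP G W k)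
    (hdeg : ∀ v ∈ S, v ∉ W → (∃ w ∈ W, G.Adj v w) →
      (nb G S v).card = 3 ∧ ∃ w0, ∀ w ∈ W, G.Adj v w → w = w0)
    (hit : ∀ C, Closed G (S \ W) C → C.card = 5 → ∃ y ∈ C, y ∈ Y)
    (hc : W.card + Y.card ≤ 4 * k) : False := by
  have hcard := Finset.card_sdiff_add_card_eq_card hWS
  have hpos := Finset.card_pos.2 hne
  obtain ⟨k', h1, h2⟩ := h.ih G (S \ W) Y (by omega) (sdiff_TT h.tt hdeg) hit
  have h3 := h1.union hW Finset.sdiff_disjoint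
  rw [Finset.sdiff_union_of_subset hWS] at h3
  have := h.bad _ h3
  omega

lemma Ctx.rl (h : Ctx G S) {W Y : Finset V} {k : ℕ} (hWS : W ⊆ S) (hne : W.Nonempty) (hW : HP G W k)
    (hdeg : ∀ v ∈ S, v ∉ W → (∃ w ∈ W, G.Adj v w) →
      (nb G S v).card = 3 ∧ ∃ w0, ∀ w ∈ W, G.Adj v w → w = w0)
    (hY : ∀ v ∈ S, v ∉ W → ∀ w ∈ W, G.Adj v w → v ∈ Y)
    (hc : W.card + Y.card ≤ 4 * k) : False := by
  refine h.rl0 hWS hne hW hdeg ?_ hc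
  intro C hC h5
  by_contra hcon
  push Not at hcon
  refine h.no5 C ⟨hC.1.trans Finset.sdiff_subset, ?_⟩ h5
  intro u hu w hw hadj
  have huS := hC.1 hu
  rw [Finset.mem_sdiff] at huS
  by_cases hwW : w ∈ W
  · exact absurd (hY u huS.1 huS.2 w hwW hadj) (hcon u hu)
  · exact hC.2 u hu w (Finset.mem_sdiff.2 ⟨hw, hwW⟩) hadj

lemma Ctx.closed (h : Ctx G S) {W : Finset V} {k : ℕ} (hcl : Closed G S W) (hne : W.Nonempty)
    (hW : HP G W k) (hc : W.card ≤ 4 * k) : False := by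
  have : ∀ v ∈ S, v ∉ W → ∀ w ∈ W, ¬ G.Adj v w := fun v hv hvW w hw ha =>
    hvW (hcl.2 w hw v hv ha.symm)
  refine h.rl (Y := ∅) hcl.1 hne hW ?_ ?_ (by simpa using hc)
  · rintro v hv hvW ⟨w, hw, ha⟩
    exact absurd ha (this v hv hvW w hw)
  · intro v hv hvW w hw ha
    exact absurd ha (this v hv hvW w hw)

/-- contraction -/
lemma Ctx.contract (h : Ctx G S) {W Y : Finset V} {x y px py : V} (hWS : W ⊆ S) (hW2 : 2 ≤ W.card)
    (hx : x ∈ S) (hxW : x ∉ W) (hy : y ∈ S) (hyW : y ∉ W) (hxy : x ≠ y) (hnadj : ¬ G.Adj x y)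
    (hpx : px ∈ W) (hpy : py ∈ W) (hxp : G.Adj x px) (hyp : G.Adj y py)
    (hW : ∀ v ∈ S, v ∉ W → ∀ w ∈ W, G.Adj v w → (v = x ∧ w = px) ∨ (v = y ∧ w = py))
    (h1 : HP G W 1)
    (h2 : ∀ w ∈ S, w ∉ W → w ≠ x → w ≠ y → G.Adj x w ∨ G.Adj y w → HP G (W ∪ {x, y, w}) 2)
    (hit : ∀ C, Closed (G ⊔ SimpleGraph.edge x y) (S \ W) C → C.card = 5 → ∃ y ∈ C, y ∈ Y)
    (hc : W.card + Y.card ≤ 4) : False := by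
  have hcard := Finset.card_sdiff_add_card_eq_card hWS
  have he : (G ⊔ SimpleGraph.edge x y).edgeSet.ncard ≤ G.edgeSet.ncard + 1 := by
    have : (G ⊔ SimpleGraph.edge x y).edgeSet ⊆ insert s(x, y) G.edgeSet := by
      rw [SimpleGraph.edgeSet_sup]
      intro e he
      rcases he with he | he
      · exact Or.inr he
      · left
        have := SimpleGraph.edgeSet_edge_of_ne hxy
        rw [this] at he
        exact he
    refine (Set.ncard_le_ncard this (Set.toFinite _)).trans (Set.ncard_insert_le _ _)
  have htt : TT (G ⊔ SimpleGraph.edge x y) (S \ W) := by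
    intro v hv
    rw [Finset.mem_sdiff] at hv
    have aux : ∀ a b pa, a ∈ S → b ∈ S → b ∉ W → pa ∈ W → G.Adj a pa → ¬ G.Adj a b → a ≠ b →
        (∀ w ∈ W, G.Adj a w → w = pa) →
        (∀ u, (G ⊔ SimpleGraph.edge x y).Adj a u ↔ G.Adj a u ∨ u = b) → 
        (nb (G ⊔ SimpleGraph.edge x y) (S \ W) a).card = (nb G S a).card := by
      intro a b pa ha hb hbW hpa hapa hab hne hwp hadj
      have e1 : nb (G ⊔ SimpleGraph.edge x y) (S \ W) a = insert b ((nb G S a).erase pa) := by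
        ext u
        rw [mem_nb, hadj, Finset.mem_sdiff, Finset.mem_insert, Finset.mem_erase, mem_nb]
        constructor
        · rintro ⟨⟨q1, q2⟩, q3 | q3⟩
          · right; exact ⟨fun e => q2 (e ▸ hpa), q1, q3⟩
          · left; exact q3
        · rintro (q | ⟨q1, q2, q3⟩)
          · subst q; exact ⟨⟨hb, hbW⟩, Or.inr rfl⟩
          · exact ⟨⟨q2, fun hW => q1 (hwp u hW q3)⟩, Or.inl q3⟩
      have hmem : pa ∈ nb G S a := mem_nb.2 ⟨hWS hpa, hapa⟩
      rw [e1, Finset.card_insert_of_notMem, Finset.card_erase_add_one hmem]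
      rw [Finset.mem_erase, mem_nb]
      rintro ⟨_, _, q⟩
      exact hab q
    by_cases hvx : v = x
    · subst hvx
      rw [aux v y px hx hy hyW hpx hxp hnadj hxy ?_ ?_]
      · exact h.tt v hx
      · intro w hw ha
        rcases hW v hx hxW w hw ha with q | q
        · exact q.2
        · exact absurd q.1 hxy
      · intro u
        simp only [SimpleGraph.sup_adj, SimpleGraph.edge_adj]
        grind
    by_cases hvy : v = y
    · subst hvy
      rw [aux v x py hy hx hxW hpy hyp (fun q => hnadj q.symm) (Ne.symm hxy) ?_ ?_]
      · exact h.tt v hy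
      · intro w hw ha
        rcases hW v hy hyW w hw ha with q | q
        · exact absurd q.1 (Ne.symm hxy)
        · exact q.2
      · intro u
        simp only [SimpleGraph.sup_adj, SimpleGraph.edge_adj]
        grind
    have : nb (G ⊔ SimpleGraph.edge x y) (S \ W) v = nb G S v := by
      ext u
      rw [mem_nb, mem_nb, Finset.mem_sdiff]
      simp only [SimpleGraph.sup_adj, SimpleGraph.edge_adj]
      have := hW v hv.1 hv.2 u
      grind
    rw [this]
    exact h.tt v hv.1
  obtain ⟨k, k1, k2⟩ := h.ih _ (S \ W) Y (by omega) htt hit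
  have := k1.lift Finset.sdiff_disjoint h1 (fun w hw => h2 w (Finset.mem_sdiff.1 hw).1 (Finset.mem_sdiff.1 hw).2)
  rw [Finset.sdiff_union_of_subset hWS] at this
  have := h.bad _ this
  omega

def Block (G : SimpleGraph V) (S C : Finset V) (c z : V) : Prop :=
  C ⊆ S ∧ C.card = 5 ∧ c ∈ C ∧ z ∈ S ∧ z ∉ C ∧ G.Adj c z ∧
    ∀ u ∈ C, ∀ w ∈ S, w ∉ C → G.Adj u w → u = c ∧ w = z

/-- big-big edges -/
lemma Ctx.bb (h : Ctx G S) {x y : V} (hx : x ∈ S) (hy : y ∈ S) (hadj : G.Adj x y)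
    (hx3 : (nb G S x).card = 3) (hy3 : (nb G S y).card = 3) :
    ∃ C, Block G S C x y ∨ Block G S C y x := by
  by_contra hcon
  push Not at hcon
  let G' := G.deleteEdges {s(x, y)}
  have hG' : ∀ u v, G'.Adj u v ↔ G.Adj u v ∧ ¬ (u = x ∧ v = y) ∧ ¬ (u = y ∧ v = x) := by
    intro u v
    simp [G', SimpleGraph.deleteEdges_adj]
  have hle : G' ≤ G := SimpleGraph.deleteEdges_le _
  have he : G'.edgeSet.ncard < G.edgeSet.ncard := by
    apply Set.ncard_lt_ncard _ (Set.toFinite _)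
    refine ⟨SimpleGraph.edgeSet_mono hle, fun hsub => ?_⟩
    have := hsub (show s(x, y) ∈ G.edgeSet from hadj)
    rw [SimpleGraph.mem_edgeSet, hG'] at this
    exact this.2.1 ⟨rfl, rfl⟩
  have hne := hadj.ne
  have htt : TT G' S := by
    intro v hv
    by_cases hvx : v = x
    · subst hvx
      have : nb G' S v = (nb G S v).erase y := by
        ext u; rw [mem_nb, Finset.mem_erase, mem_nb, hG']; grind
      rw [this, Finset.card_erase_of_mem (mem_nb.2 ⟨hy, hadj⟩), hx3]; simp
    by_cases hvy : v = y
    · subst hvy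
      have : nb G' S v = (nb G S v).erase x := by
        ext u; rw [mem_nb, Finset.mem_erase, mem_nb, hG']; grind
      rw [this, Finset.card_erase_of_mem (mem_nb.2 ⟨hx, hadj.symm⟩), hy3]; simp
    have : nb G' S v = nb G S v := by
      ext u; rw [mem_nb, mem_nb, hG']; grind
    rw [this]; exact h.tt v hv
  obtain ⟨k, ⟨P, p1, p2, p3⟩, k2⟩ := h.ih G' S ∅ (by omega) htt (by
    intro C hC h5
    exfalso
    have hs := hadj.symm
    by_cases hxC : x ∈ C <;> by_cases hyC : y ∈ C
    · refine h.no5 C ⟨hC.1, fun u hu w hw ha => ?_⟩ h5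
      have := hC.2 u hu w hw
      rw [hG'] at this
      grind
    · refine (hcon C).1 ⟨hC.1, h5, hxC, hy, hyC, hadj, fun u hu w hw hwC ha => ?_⟩
      have := hC.2 u hu w hw
      rw [hG'] at this
      grind
    · refine (hcon C).2 ⟨hC.1, h5, hyC, hx, hxC, hs, fun u hu w hw hwC ha => ?_⟩
      have := hC.2 u hu w hw
      rw [hG'] at this
      grind
    · refine h.no5 C ⟨hC.1, fun u hu w hw ha => ?_⟩ h5
      have := hC.2 u hu w hw
      rw [hG'] at this
      grind)
  have : HP G S k := by
    refine ⟨P, fun t ht => ⟨?_, (p1 t ht).2⟩, p2, p3⟩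
    obtain ⟨a, b, c, q1, q2, q3, q4⟩ := (p1 t ht).1
    exact ⟨a, b, c, hle q1, hle q2, q3, q4⟩
  have := h.bad k this
  simp at k2
  omega

end Pk

namespace Pk
open Finset Classical
variable {V : Type} {G : SimpleGraph V} {S T : Finset V}

lemma get5 {C : Finset V} (h5 : C.card = 5) {c u : V} (hc : c ∈ C) (hu : u ∈ C) (hne : c ≠ u) :
    ∃ p q r, p ≠ q ∧ p ≠ r ∧ q ≠ r ∧ p ≠ c ∧ q ≠ c ∧ r ≠ c ∧ p ≠ u ∧ q ≠ u ∧ r ≠ u ∧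
      p ∈ C ∧ q ∈ C ∧ r ∈ C ∧ ∀ w ∈ C, w = c ∨ w = u ∨ w = p ∨ w = q ∨ w = r := by
  have h3 : ((C.erase c).erase u).card = 3 := by
    rw [Finset.card_erase_of_mem (Finset.mem_erase.2 ⟨hne.symm, hu⟩), Finset.card_erase_of_mem hc, h5]
  obtain ⟨p, q, r, h1, h2, h3, he⟩ := Finset.card_eq_three.1 h3
  have hp : p ∈ (C.erase c).erase u := by simp [he]
  have hq : q ∈ (C.erase c).erase u := by simp [he]
  have hr : r ∈ (C.erase c).erase u := by simp [he]
  simp only [Finset.mem_erase] at hp hq hr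
  refine ⟨p, q, r, h1, h2, h3, hp.2.1, hq.2.1, hr.2.1, hp.1, hq.1, hr.1, hp.2.2, hq.2.2, hr.2.2, ?_⟩
  intro w hw
  by_cases w1 : w = c
  · exact Or.inl w1
  by_cases w2 : w = u
  · exact Or.inr (Or.inl w2)
  have : w ∈ (C.erase c).erase u := by simp [w1, w2, hw]
  rw [he] at this
  simp at this
  tauto

lemma three_other {C : Finset V} {x c u p q r : V} (hx : x ∉ C) (hc : c ∈ C) (hu : u ∈ C)
    (hp : p ∈ C) (hq : q ∈ C) (hr : r ∈ C) (h1 : p ≠ c) (h2 : q ≠ c) (h3 : r ≠ c)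
    (g1 : p ≠ u) (g2 : q ≠ u) (g3 : r ≠ u) (hcx : G.Adj c x) (hcu : G.Adj c u)
    (h : HP G {p, q, r} 1) : HP G (insert x C) 2 := by
  have hxu : x ≠ u := fun e => hx (e ▸ hu)
  have A : HP G ({x, c, u} : Finset V) 1 :=
    HP.one hcx.symm hcu hxu (by simp) (by simp) (by simp)
  have B := A.union h (by
    rw [Finset.disjoint_left]
    intro w hw hw'
    simp only [Finset.mem_insert, Finset.mem_singleton] at hw hw'
    grind)
  refine B.mono ?_
  intro w hw
  simp only [Finset.mem_union, Finset.mem_insert, Finset.mem_singleton] at hw ⊢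
  grind

lemma blk {C : Finset V} (h5 : C.card = 5) {c x : V} (hc : c ∈ C) (hx : x ∉ C) (hadj : G.Adj c x)
    (hdeg : ∀ u ∈ C, u ≠ c → 2 ≤ (nb G C u).card) (hc1 : ∃ u ∈ C, G.Adj c u)
    (hc2 : (nb G C c).card ≤ 2) : HP G (insert x C) 2 := by
  obtain ⟨u, hu, hcu⟩ := hc1
  by_cases hv : ∃ v ∈ C, v ≠ u ∧ G.Adj c v
  · obtain ⟨v, hv, hvu, hcv⟩ := hv
    have hcn : ∀ w ∈ C, G.Adj c w → w = u ∨ w = v := by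
      have : (nb G C c).card = 2 := by
        apply le_antisymm hc2
        exact Finset.one_lt_card.2 ⟨u, mem_nb.2 ⟨hu, hcu⟩, v, mem_nb.2 ⟨hv, hcv⟩, hvu.symm⟩
      exact nb2'' this hu hcu hv hcv hvu.symm
    obtain ⟨p, q, r, p1, p2, p3, p4, p5, p6, p7, p8, p9, hp, hq, hr, hall⟩ := get5 h5 hc hu hcu.ne
    have key : ∃ a b, a ≠ b ∧ a ≠ c ∧ b ≠ c ∧ a ≠ u ∧ b ≠ u ∧ a ≠ v ∧ b ≠ v ∧ a ∈ C ∧ b ∈ C ∧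
        ∀ w ∈ C, w = c ∨ w = u ∨ w = v ∨ w = a ∨ w = b := by
      have hcv' := hcv.ne
      rcases hall v hv with e | e | e | e | e
      · grind
      · grind
      · exact ⟨q, r, by grind⟩
      · exact ⟨p, r, by grind⟩
      · exact ⟨p, q, by grind⟩
    obtain ⟨a, b, hab, hac, hbc, hau, hbu, hav, hbv, ha, hb, hall⟩ := key
    obtain ⟨a1, a2, an, am1, am2, aa1, aa2⟩ := two_nb (hdeg a ha hac)
    obtain ⟨b1, b2, bn, bm1, bm2, bb1, bb2⟩ := two_nb (hdeg b hb hbc)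
    have a1c : a1 ≠ c := by rintro rfl; have := hcn a ha aa1.symm; grind
    have a2c : a2 ≠ c := by rintro rfl; have := hcn a ha aa2.symm; grind
    have b1c : b1 ≠ c := by rintro rfl; have := hcn b hb bb1.symm; grind
    have b2c : b2 ≠ c := by rintro rfl; have := hcn b hb bb2.symm; grind
    have an1 := aa1.ne
    have an2 := aa2.ne
    have bn1 := bb1.ne
    have bn2 := bb2.ne
    have ea : (G.Adj a u ∧ G.Adj a v) ∨ (G.Adj a u ∧ G.Adj a b) ∨ (G.Adj a v ∧ G.Adj a b) := by
      clear hdeg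
      rcases hall a1 am1 with e | e | e | e | e <;> rcases hall a2 am2 with f | f | f | f | f <;> grind
    have eb : (G.Adj b u ∧ G.Adj b v) ∨ (G.Adj b a) := by
      clear hdeg
      rcases hall b1 bm1 with e | e | e | e | e <;> rcases hall b2 bm2 with f | f | f | f | f <;> grind
    by_cases hadjab : G.Adj a b
    · by_cases hv' : G.Adj a v
      · exact three_other (p := v) (q := a) (r := b) hx hc hu hv ha hb (hcv.ne.symm) hac hbc hvu hau hbu hadj hcu
          (HP.one hv'.symm hadjab hbv.symm (by simp) (by simp) (by simp))
      · have hu' : G.Adj a u := by tauto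
        exact three_other (p := u) (q := a) (r := b) hx hc hv hu ha hb (hcu.ne.symm) hac hbc hvu.symm hav hbv hadj hcv
          (HP.one hu'.symm hadjab hbu.symm (by simp) (by simp) (by simp))
    · have := mt (G.adj_symm (u := b) (v := a)) hadjab
      have e1 : G.Adj a v := by tauto
      have e2 : G.Adj b v := by tauto
      exact three_other (p := a) (q := v) (r := b) hx hc hu ha hv hb hac (hcv.ne.symm) hbc hau hvu hbu hadj hcu
          (HP.one e1 e2.symm hab (by simp) (by simp) (by simp))
  · push Not at hv
    have hcn : ∀ w ∈ C, G.Adj c w → w = u := by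
      intro w hw ha
      by_contra hne
      exact hv w hw hne ha
    obtain ⟨p, q, r, p1, p2, p3, p4, p5, p6, p7, p8, p9, hp, hq, hr, hall⟩ := get5 h5 hc hu hcu.ne
    have key : ∀ a ∈ C, a ≠ c → a ≠ u → ∃ w ∈ C, w ≠ u ∧ w ≠ c ∧ G.Adj a w := by
      intro a ha hac hau
      obtain ⟨a1, a2, an, am1, am2, aa1, aa2⟩ := two_nb (hdeg a ha hac)
      have a1c : a1 ≠ c := by rintro rfl; have := hcn a ha aa1.symm; grind
      have a2c : a2 ≠ c := by rintro rfl; have := hcn a ha aa2.symm; grind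
      by_cases e : a1 = u
      · exact ⟨a2, am2, by grind, a2c, aa2⟩
      · exact ⟨a1, am1, by grind, a1c, aa1⟩
    refine three_other (p := p) (q := q) (r := r) hx hc hu hp hq hr p4 p5 p6 p7 p8 p9 hadj hcu ?_
    apply three_conn p1 p2 p3
    · obtain ⟨w, w1, w2, w3, w4⟩ := key p hp p4 p7
      have := hall w w1; have := w4.ne; grind
    · obtain ⟨w, w1, w2, w3, w4⟩ := key q hq p5 p8
      have := hall w w1; have := w4.ne; grind
    · obtain ⟨w, w1, w2, w3, w4⟩ := key r hr p6 p9
      have := hall w w1; have := w4.ne; grind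

variable [Fintype V]

lemma nb_sub {C : Finset V} (hC : C ⊆ S) (v : V) : nb G C v ⊆ nb G S v := by
  intro u hu; rw [mem_nb] at *; exact ⟨hC hu.1, hu.2⟩

lemma TT.two (tt : TT G S) {v : V} (hv : v ∈ S) : 2 ≤ (nb G S v).card := by
  rcases tt v hv with h | h <;> omega

lemma Block.nb_eq {C : Finset V} {c z u : V} (B : Block G S C c z) (hu : u ∈ C) (hne : u ≠ c) :
    nb G C u = nb G S u := by
  obtain ⟨b1, b2, b3, b4, b5, b6, b7⟩ := B
  apply Finset.Subset.antisymm (nb_sub b1 u)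
  intro w hw
  rw [mem_nb] at *
  refine ⟨?_, hw.2⟩
  by_contra h
  exact hne (b7 u hu w hw.1 h hw.2).1

lemma Block.nb_c {C : Finset V} {c z : V} (B : Block G S C c z) :
    nb G C c = (nb G S c).erase z := by
  obtain ⟨b1, b2, b3, b4, b5, b6, b7⟩ := B
  ext w
  rw [Finset.mem_erase, mem_nb, mem_nb]
  constructor
  · rintro ⟨h1, h2⟩
    exact ⟨fun e => b5 (e ▸ h1), b1 h1, h2⟩
  · rintro ⟨h1, h2, h3⟩
    refine ⟨?_, h3⟩
    by_contra h
    exact h1 (b7 c b3 w h2 h h3).2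

lemma Block.hp2 (tt : TT G S) {C : Finset V} {c z : V} (B : Block G S C c z) :
    HP G (insert z C) 2 := by
  have B' := B
  obtain ⟨b1, b2, b3, b4, b5, b6, b7⟩ := B
  have hcc := B'.nb_c
  have hcard : (nb G C c).card = (nb G S c).card - 1 := by
    rw [hcc, Finset.card_erase_of_mem (mem_nb.2 ⟨b4, b6⟩)]
  have := tt c (b1 b3)
  refine blk b2 b3 b5 b6 ?_ ?_ (by omega)
  · intro u hu hne
    rw [B'.nb_eq hu hne]; exact tt.two (b1 hu)
  · have : (nb G C c).Nonempty := Finset.card_pos.1 (by omega)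
    obtain ⟨u, hu⟩ := this
    rw [mem_nb] at hu
    exact ⟨u, hu⟩

lemma Block.exists_ne {C : Finset V} {c z : V} (B : Block G S C c z) : ∃ u ∈ C, u ≠ c := by
  obtain ⟨b1, b2, b3, b4, b5, b6, b7⟩ := B
  exact Finset.exists_mem_ne (by omega) c

lemma Block.hp1 (tt : TT G S) {C : Finset V} {c z : V} (B : Block G S C c z) :
    HP G C 1 := by
  obtain ⟨u, hu, hne⟩ := B.exists_ne
  have h2 : 2 ≤ (nb G C u).card := by
    rw [B.nb_eq hu hne]; exact tt.two (B.1 hu)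
  obtain ⟨a, b, h1, h3, h4, h5, h6⟩ := two_nb h2
  exact HP.one h5.symm h6 h1 h3 hu h4

/-- run contraction -/
lemma Ctx.runc (h : Ctx G S) {x y p1 p2 p3 : V} (hx : x ∈ S) (hy : y ∈ S) (h1 : p1 ∈ S) (h2 : p2 ∈ S)
    (h3 : p3 ∈ S) (d1 : (nb G S p1).card = 2) (d2 : (nb G S p2).card = 2) (d3 : (nb G S p3).card = 2)
    (e1 : G.Adj p1 p2) (e2 : G.Adj p2 p3) (ex : G.Adj p1 x) (ey : G.Adj p3 y) (hne : p1 ≠ p3)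
    (hx2 : x ≠ p2) (hy2 : y ≠ p2) (hx3 : x ≠ p3) (hxy : x ≠ y) (hna : ¬ G.Adj x y) : False := by
  have n1 := nb2'' d1 h2 e1 hx ex hx2.symm
  have n2 := nb2'' d2 h1 e1.symm h3 e2 hne
  have n3 := nb2'' d3 h2 e2.symm hy ey hy2.symm
  have hy1 : y ≠ p1 := by
    rintro rfl
    have := n1 p3 h3 ey.symm
    have := e2.ne
    grind
  have hx1 := ex.ne
  have hy3 := ey.ne
  have h12 := e1.ne
  have h23 := e2.ne
  have hW3 : ({p1, p2, p3} : Finset V).card = 3 := Finset.card_eq_three.2 ⟨p1, p2, p3, h12, hne, h23, rfl⟩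
  have hbd : ∀ v ∈ S, v ∉ ({p1, p2, p3} : Finset V) → ∀ w ∈ ({p1, p2, p3} : Finset V), G.Adj v w →
      (v = x ∧ w = p1) ∨ (v = y ∧ w = p3) := by
    intro v hv hvW w hw ha
    simp only [Finset.mem_insert, Finset.mem_singleton] at hvW hw
    have ha' := ha.symm
    rcases hw with rfl | rfl | rfl
    · have := n1 v hv ha'; grind
    · have := n2 v hv ha'; grind
    · have := n3 v hv ha'; grind
  refine h.contract (W := {p1, p2, p3}) (Y := {x}) (x := x) (y := y) (px := p1) (py := p3) ?_ (by omega) hx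
    ?_ hy ?_ hxy hna (by simp) (by simp) ex.symm ey.symm hbd
    (HP.one e1 e2 hne (by simp) (by simp) (by simp)) ?_ ?_ (by simp [hW3])
  · intro w hw; simp at hw; grind
  · simp; grind
  · simp; grind
  · intro w hw hwW hwx hwy hor
    simp only [Finset.mem_insert, Finset.mem_singleton, not_or] at hwW
    rcases hor with ho | ho
    · refine HP.two ho.symm ex.symm hwW.1 e2 ey hy2.symm ?_ ?_ ?_
      · intro u hu; simp at hu ⊢; grind
      · intro u hu; simp at hu ⊢; grind
      · simp; grind
    · refine HP.two ho.symm ey.symm hwW.2.2 e1.symm ex hx2.symm ?_ ?_ ?_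
      · intro u hu; simp at hu ⊢; grind
      · intro u hu; simp at hu ⊢; grind
      · simp; grind
  · intro C hC h5
    by_contra hcon
    push Not at hcon
    have hxC : x ∉ C := fun hh => hcon x hh (by simp)
    have hyC : y ∉ C := by
      intro hh
      refine hxC (hC.2 y hh x (Finset.mem_sdiff.2 ⟨hx, by simp; grind⟩) ?_)
      simp only [SimpleGraph.sup_adj, SimpleGraph.edge_adj]
      grind
    refine h.no5 C ⟨hC.1.trans Finset.sdiff_subset, ?_⟩ h5
    intro u hu w hw ha
    have huS := Finset.mem_sdiff.1 (hC.1 hu)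
    by_cases hwW : w ∈ ({p1, p2, p3} : Finset V)
    · have := hbd u huS.1 huS.2 w hwW ha
      grind
    · exact hC.2 u hu w (Finset.mem_sdiff.2 ⟨hw, hwW⟩) (Or.inl ha)

end Pk

namespace Pk
open Finset Classical
variable {V : Type} {G : SimpleGraph V} {S T : Finset V}
variable [Fintype V]

lemma card4 {a b c d : V} (h : [a, b, c, d].Nodup) : ({a, b, c, d} : Finset V).card = 4 := by
  simp at h
  rw [card_insert_of_notMem, card_insert_of_notMem, card_insert_of_notMem, card_singleton] <;> simp <;> tauto

lemma card5 {a b c d e : V} (h : [a, b, c, d, e].Nodup) : ({a, b, c, d, e} : Finset V).card = 5 := by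
  simp at h
  rw [card_insert_of_notMem, card_insert_of_notMem, card_insert_of_notMem, card_insert_of_notMem,
    card_singleton] <;> simp <;> tauto

lemma Ctx.F1 (h : Ctx G S) {C : Finset V} {c z : V} (B : Block G S C c z) : (nb G S z).card = 3 := by
  have hp := B.hp2 h.tt
  obtain ⟨b1, b2, b3, b4, b5, b6, b7⟩ := B
  by_contra h3
  have hz2 := (h.tt z b4).resolve_right h3
  obtain ⟨z1, z1c, z1S, z1a, z1n⟩ := nb2' hz2 (b1 b3) b6.symm
  have z1C : z1 ∉ C := fun hh => z1c (b7 z1 hh z b4 b5 z1a.symm).1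
  have hzz1 := z1a.ne
  rcases h.tt z1 z1S with hz1 | hz1
  · obtain ⟨z2, z2z, z2S, z2a, z2n⟩ := nb2' hz1 b4 z1a.symm
    have z2C : z2 ∉ C := fun hh => hzz1 (b7 z2 hh z1 z1S z1C z2a.symm).2.symm
    have hz12 := z2a.ne
    rcases h.tt z2 z2S with hz2' | hz2'
    · obtain ⟨z3, z31, z3S, z3a, z3n⟩ := nb2' hz2' z1S z2a.symm
      have hcz3 : c ≠ z3 := by
        rintro rfl
        exact z2z (b7 c b3 z2 z2S z2C z3a.symm).2
      refine h.runc (x := c) (y := z3) (b1 b3) z3S b4 z1S z2S hz2 hz1 hz2' z1a z2a b6.symm z3a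
        z2z.symm (Ne.symm z1c) z31 (fun e => z2C (e ▸ b3)) hcz3 ?_
      intro ha
      by_cases hzC : z3 ∈ C
      · exact hcz3 (b7 z3 hzC z2 z2S z2C z3a.symm).1.symm
      · have := (b7 c b3 z3 z3S hzC ha).2
        subst this
        rcases z1n z2 z2S z3a.symm with e | e
        · exact z2C (e ▸ b3)
        · exact hz12 e.symm
    · have key : ∀ v ∈ S, v ∉ insert z1 (insert z C) → ∀ w ∈ insert z1 (insert z C), G.Adj v w → v = z2 ∧ w = z1 := by
        intro v hv hvW w hw ha
        simp only [Finset.mem_insert, not_or] at hvW hw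
        have ha' := ha.symm
        rcases hw with rfl | rfl | hw
        · have := z2n v hv ha'; grind
        · have := z1n v hv ha'; grind
        · have := b7 w hw v hv hvW.2.2 ha'; grind
      have hcard : (insert z1 (insert z C)).card = 7 := by
        rw [card_insert_of_notMem, card_insert_of_notMem b5, b2]; simp; grind
      refine h.rl (W := insert z1 (insert z C)) (Y := {z2}) (k := 2) ?_ ⟨z1, by simp⟩ (hp.mono (by simp)) ?_ ?_ (by simp [hcard])
      · intro u hu; simp at hu; grind
      · rintro v hv hvW ⟨w, hw, ha⟩
        have := key v hv hvW w hw ha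
        refine ⟨this.1 ▸ hz2', z1, fun w' hw' ha' => (key v hv hvW w' hw' ha').2⟩
      · intro v hv hvW w hw ha
        simp [(key v hv hvW w hw ha).1]
  · have key : ∀ v ∈ S, v ∉ (insert z C) → ∀ w ∈ (insert z C), G.Adj v w → v = z1 ∧ w = z := by
      intro v hv hvW w hw ha
      simp only [Finset.mem_insert, not_or] at hvW hw
      have ha' := ha.symm
      rcases hw with rfl | hw
      · have := z1n v hv ha'; grind
      · have := b7 w hw v hv hvW.2 ha'; grind
    have hcard : (insert z C).card = 6 := by
      rw [card_insert_of_notMem b5, b2]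
    refine h.rl (W := (insert z C)) (Y := {z1}) (k := 2) ?_ ⟨z, by simp⟩ hp ?_ ?_ (by simp [hcard])
    · intro u hu; simp at hu; grind
    · rintro v hv hvW ⟨w, hw, ha⟩
      have := key v hv hvW w hw ha
      refine ⟨this.1 ▸ hz1, z, fun w' hw' ha' => (key v hv hvW w' hw' ha').2⟩
    · intro v hv hvW w hw ha
      simp [(key v hv hvW w hw ha).1]

lemma run_a {x y p1 p2 p3 : V} (hx : x ∈ S) (hy : y ∈ S) (h1 : p1 ∈ S) (h2 : p2 ∈ S)
    (h3 : p3 ∈ S)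
    (n1 : ∀ w ∈ S, G.Adj p1 w → w = p2 ∨ w = x) (n2 : ∀ w ∈ S, G.Adj p2 w → w = p1 ∨ w = p3)
    (n3 : ∀ w ∈ S, G.Adj p3 w → w = p2 ∨ w = y)
    (hnd : [x, p1, p2, p3, y].Nodup) (hxy : G.Adj x y) (hxp : G.Adj x p1) (hyp : G.Adj y p3)
    (dx : (nb G S x).card = 2) (dy : (nb G S y).card = 3) :
    ∃ C c z, Block G S C c z ∧ p2 ∈ C := by
  have nx := nb2'' dx hy hxy h1 hxp (by simp at hnd; grind)
  obtain ⟨z, z1, z2, zS, za, nz⟩ := nb3'' dy hx hxy.symm h3 hyp (by simp at hnd; grind)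
  have hc := card5 hnd
  simp at hnd
  refine ⟨{x, p1, p2, p3, y}, y, z, ⟨?_, hc, by simp, zS, ?_, za, ?_⟩, by simp⟩
  · intro u hu; simp at hu; grind
  · have := za.symm
    have := za.ne
    simp only [Finset.mem_insert, Finset.mem_singleton, not_or]
    refine ⟨z1.symm, ?_, ?_, z2.symm, za.ne.symm⟩
    · rintro rfl; have := n1 y hy za.symm; grind
    · rintro rfl; have := n2 y hy za.symm; grind
  · intro u hu w hw hwC ha
    simp only [Finset.mem_insert, Finset.mem_singleton, not_or] at hu hwC
    rcases hu with rfl | rfl | rfl | rfl | rfl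
    · have := nx w hw ha; grind
    · have := n1 w hw ha; grind
    · have := n2 w hw ha; grind
    · have := n3 w hw ha; grind
    · have := nz w hw ha; grind

lemma run_b {x y p1 p2 p3 : V} {C : Finset V} (h1 : p1 ∈ S) (h2 : p2 ∈ S)
    (h3 : p3 ∈ S) (hnd : [x, p1, p2, p3, y].Nodup) (a1 : G.Adj x p1) (a2 : G.Adj p1 p2) (a3 : G.Adj p2 p3)
    (a4 : G.Adj p3 y) (B : Block G S C x y) : False := by
  obtain ⟨b1, b2, b3, b4, b5, b6, b7⟩ := B
  simp at hnd
  have c1 : p1 ∈ C := by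
    by_contra hh
    have := b7 x b3 p1 h1 hh a1; grind
  have c2 : p2 ∈ C := by
    by_contra hh
    have := b7 p1 c1 p2 h2 hh a2; grind
  have c3 : p3 ∈ C := by
    by_contra hh
    have := b7 p2 c2 p3 h3 hh a3; grind
  have := b7 p3 c3 y b4 b5 a4; grind

lemma Ctx.run (h : Ctx G S) {p1 p2 p3 : V} (h1 : p1 ∈ S) (h2 : p2 ∈ S)
    (h3 : p3 ∈ S) (d1 : (nb G S p1).card = 2) (d2 : (nb G S p2).card = 2) (d3 : (nb G S p3).card = 2)
    (e1 : G.Adj p1 p2) (e2 : G.Adj p2 p3) (hne : p1 ≠ p3) :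
    ∃ C c z, Block G S C c z ∧ p2 ∈ C := by
  obtain ⟨x, hxp2, hx, xa, n1⟩ := nb2' d1 h2 e1
  obtain ⟨y, hyp2, hy, ya, n3⟩ := nb2' d3 h2 e2.symm
  have n2 := nb2'' d2 h1 e1.symm h3 e2 hne
  have h12 := e1.ne
  have h23 := e2.ne
  by_cases hx3 : x = p3
  · subst hx3
    exfalso
    have hcl : Closed G S {p1, p2, x} := by
      refine ⟨?_, ?_⟩
      · intro u hu; simp at hu; grind
      · intro u hu w hw ha
        have := xa.symm
        have := n3 p1 h1 xa.symm
        simp at hu ⊢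
        grind
    refine h.closed (k := 1) hcl ⟨p1, by simp⟩ (HP.one e1 e2 hne (by simp) (by simp) (by simp)) ?_
    have := Finset.card_le_three (a := p1) (b := p2) (c := x)
    omega
  have hy1 : y ≠ p1 := by
    rintro rfl
    have := n1 p3 h3 ya.symm
    grind
  have hx1 := xa.ne
  have hy3 := ya.ne
  by_cases hxy : x = y
  · subst hxy
    rcases h.tt x hx with dx | dx
    · exfalso
      have nx := nb2'' dx h1 xa.symm h3 ya.symm hne
      have hcl : Closed G S {p1, p2, p3, x} := by
        refine ⟨?_, ?_⟩
        · intro u hu; simp at hu; grind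
        · intro u hu w hw ha
          simp only [Finset.mem_insert, Finset.mem_singleton] at hu ⊢
          rcases hu with rfl | rfl | rfl | rfl
          · have := n1 w hw ha; tauto
          · have := n2 w hw ha; tauto
          · have := n3 w hw ha; tauto
          · have := nx w hw ha; tauto
      refine h.closed (k := 1) hcl ⟨p1, by simp⟩ (HP.one e1 e2 hne (by simp) (by simp) (by simp)) ?_
      have := Finset.card_le_four (a := p1) (b := p2) (c := p3) (d := x)
      omega
    · obtain ⟨w, w1, w3, wS, wa, nx⟩ := nb3'' dx h1 xa.symm h3 ya.symm hne
      have hwx := wa.ne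
      have hw2 : w ≠ p2 := by
        rintro rfl
        have := n2 x hx wa.symm; grind
      rcases h.tt w wS with dw | dw
      · obtain ⟨w', w'x, w'S, w'a, nw⟩ := nb2' dw hx wa.symm
        have hww := w'a.ne
        refine ⟨{x, p1, p2, p3, w}, w, w', ⟨?_, card5 ?_, by simp, w'S, ?_, w'a, ?_⟩, by simp⟩
        · intro u hu; simp at hu; grind
        · simp; grind
        · simp only [Finset.mem_insert, Finset.mem_singleton, not_or]
          refine ⟨w'x, ?_, ?_, ?_, hww.symm⟩
          · rintro rfl; have := n1 w wS w'a.symm; grind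
          · rintro rfl; have := n2 w wS w'a.symm; grind
          · rintro rfl; have := n3 w wS w'a.symm; grind
        · intro u hu v hv hvC ha
          simp only [Finset.mem_insert, Finset.mem_singleton, not_or] at hu hvC
          rcases hu with rfl | rfl | rfl | rfl | rfl
          · have := nx v hv ha; grind
          · have := n1 v hv ha; grind
          · have := n2 v hv ha; grind
          · have := n3 v hv ha; grind
          · have := nw v hv ha; grind
      · exfalso
        obtain ⟨C, B | B⟩ := h.bb hx wS wa dx dw
        · have B' := B
          obtain ⟨b1, b2, b3, b4, b5, b6, b7⟩ := B
          have c1 : p1 ∈ C := by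
            by_contra hh
            have := b7 x b3 p1 h1 hh xa.symm; grind
          have c2 : p2 ∈ C := by
            by_contra hh
            have := b7 p1 c1 p2 h2 hh e1; grind
          have c3 : p3 ∈ C := by
            by_contra hh
            have := b7 p2 c2 p3 h3 hh e2; grind
          have : ∃ u ∈ C, u ∉ ({x, p1, p2, p3} : Finset V) := by
            by_contra hh
            push Not at hh
            have q1 := Finset.card_le_card (show C ⊆ ({x, p1, p2, p3} : Finset V) from hh)
            have := Finset.card_le_four (a := x) (b := p1) (c := p2) (d := p3)
            omega
          obtain ⟨u, hu, hu'⟩ := this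
          simp only [Finset.mem_insert, Finset.mem_singleton, not_or] at hu'
          have huc := B'.nb_eq hu hu'.1
          have hcard : 2 ≤ (nb G C u).card := by rw [huc]; exact h.tt.two (b1 hu)
          obtain ⟨a, b, hab, ha, hb, ua, ub⟩ := two_nb hcard
          have hCe : C = {x, p1, p2, p3, u} := by
            symm
            apply Finset.eq_of_subset_of_card_le
            · intro q hq; simp at hq; grind
            · rw [card5, b2]; simp; grind
          rw [hCe] at ha
          simp only [Finset.mem_insert, Finset.mem_singleton] at ha
          have huS := b1 hu
          rcases ha with rfl | rfl | rfl | rfl | rfl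
          · have := nx u huS ua.symm; grind
          · have := n1 u huS ua.symm; grind
          · have := n2 u huS ua.symm; grind
          · have := n3 u huS ua.symm; grind
          · exact ua.ne rfl
        · have hp := B.hp2 h.tt
          obtain ⟨b1, b2, b3, b4, b5, b6, b7⟩ := B
          have c1 : p1 ∉ C := fun hh => by have := b7 p1 hh x hx b5 xa; grind
          have c3 : p3 ∉ C := fun hh => by have := b7 p3 hh x hx b5 ya; grind
          have c2 : p2 ∉ C := fun hh => by have := b7 p2 hh p1 h1 c1 e1.symm; grind
          have hT : HP G ({p1, p2, p3} : Finset V) 1 := HP.one e1 e2 hne (by simp) (by simp) (by simp)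
          have hd : Disjoint (insert x C) ({p1, p2, p3} : Finset V) := by
            rw [Finset.disjoint_left]
            intro u hu hu'
            simp at hu hu'
            grind
          refine h.closed (W := insert x C ∪ {p1, p2, p3}) (k := 2 + 1) ⟨?_, ?_⟩ ⟨x, by simp⟩ (hp.union hT hd) ?_
          · intro u hu; simp at hu; grind
          · intro u hu v hv ha
            simp only [Finset.mem_union, Finset.mem_insert, Finset.mem_singleton] at hu ⊢
            rcases hu with (rfl | hu) | rfl | rfl | rfl
            · have := nx v hv ha; grind
            · by_cases hvC : v ∈ C
              · tauto
              · have := b7 u hu v hv hvC ha; tauto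
            · have := n1 v hv ha; tauto
            · have := n2 v hv ha; tauto
            · have := n3 v hv ha; tauto
          · have := Finset.card_union_le (insert x C) {p1, p2, p3}
            have := Finset.card_insert_le x C
            have := Finset.card_le_three (a := p1) (b := p2) (c := p3)
            omega
  by_cases hadj : G.Adj x y
  swap
  · exact (h.runc hx hy h1 h2 h3 d1 d2 d3 e1 e2 xa ya hne hxp2 hyp2 hx3 hxy hadj).elim
  have hnd : [x, p1, p2, p3, y].Nodup := by simp; grind
  have hnd' : [y, p3, p2, p1, x].Nodup := by simp; grind
  have n2' : ∀ w ∈ S, G.Adj p2 w → w = p3 ∨ w = p1 := fun w hw ha => (n2 w hw ha).symm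
  rcases h.tt x hx with dx | dx <;> rcases h.tt y hy with dy | dy
  · exfalso
    have nx := nb2'' dx h1 xa.symm hy hadj hy1.symm
    have ny := nb2'' dy h3 ya.symm hx hadj.symm (Ne.symm hx3)
    refine h.no5 {x, p1, p2, p3, y} ⟨?_, ?_⟩ (card5 hnd)
    · intro u hu; simp at hu; grind
    · intro u hu w hw ha
      simp only [Finset.mem_insert, Finset.mem_singleton] at hu ⊢
      rcases hu with rfl | rfl | rfl | rfl | rfl
      · have := nx w hw ha; tauto
      · have := n1 w hw ha; tauto
      · have := n2 w hw ha; tauto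
      · have := n3 w hw ha; tauto
      · have := ny w hw ha; tauto
  · exact run_a hx hy h1 h2 h3 n1 n2 n3 hnd hadj xa.symm ya.symm dx dy
  · exact run_a hy hx h3 h2 h1 n3 n2' n1 hnd' hadj.symm ya.symm xa.symm dy dx
  · exfalso
    obtain ⟨C, B | B⟩ := h.bb hx hy hadj dx dy
    · exact run_b h1 h2 h3 hnd xa.symm e1 e2 ya B
    · exact run_b h3 h2 h1 hnd' ya.symm e2.symm e1.symm xa B

end Pk

namespace Pk
open Finset Classical
variable {V : Type} {G : SimpleGraph V} {S T : Finset V}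
variable [Fintype V]

lemma three_le {X : Finset V} {v a b : V} (hv : v ∈ X) (ha : a ∈ X) (hb : b ∈ X) (h1 : v ≠ a) (h2 : v ≠ b)
    (h3 : a ≠ b) : 3 ≤ X.card := by
  rw [← Finset.card_eq_three.2 ⟨v, a, b, h1, h2, h3, rfl⟩]
  apply Finset.card_le_card
  intro u hu; simp at hu; grind

lemma sat_three (tt : TT G S) {X : Finset V} {v : V} (hX : X ⊆ S) (hv : v ∈ X)
    (hs : ∀ w ∈ S, G.Adj v w → w ∈ X) : 3 ≤ X.card := by
  obtain ⟨a, b, h1, h3, h4, h5, h6⟩ := two_nb (tt.two (hX hv))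
  exact three_le hv (hs a h3 h5) (hs b h4 h6) h5.ne h6.ne h1

lemma nb_le_two {v a b : V} (hs : ∀ w ∈ S, G.Adj v w → w = a ∨ w = b) : (nb G S v).card ≤ 2 := by
  refine (Finset.card_le_card (t := {a, b}) ?_).trans Finset.card_le_two
  intro w hw; rw [mem_nb] at hw; simpa using hs w hw.1 hw.2

lemma nb_le_one {v a : V} (hs : ∀ w ∈ S, G.Adj v w → w = a) : (nb G S v).card ≤ 1 := by
  refine (Finset.card_le_card (t := {a}) ?_).trans (by simp)
  intro w hw; rw [mem_nb] at hw; simpa using hs w hw.1 hw.2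

lemma small (tt : TT G S) {X : Finset V} (hX : X ⊆ S) (hne : X.Nonempty) {u0 w0 : V}
    (hl : ∀ u ∈ X, ∀ w ∈ S, w ∉ X → G.Adj u w → u = u0 ∧ w = w0) : 3 ≤ X.card := by
  by_cases h : ∃ u ∈ X, u ≠ u0
  · obtain ⟨u, hu, hne⟩ := h
    refine sat_three tt hX hu (fun w hw ha => ?_)
    by_contra hh
    exact hne (hl u hu w hw hh ha).1
  · push Not at h
    obtain ⟨u, hu⟩ := hne
    exfalso
    have : (nb G S u).card ≤ 1 := by
      apply nb_le_one (a := w0)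
      intro w hw ha
      refine (hl u hu w hw ?_ ha).2
      intro hwX
      exact ha.ne ((h u hu).trans (h w hwX).symm)
    have := tt.two (hX hu)
    omega

lemma Ctx.T2big (h : Ctx G S) {C C' : Finset V} {c z c' z' : V} (B : Block G S C c z)
    (B' : Block G S C' c' z') (hne : (C \ C').Nonempty) : 3 ≤ (C \ C').card := by
  have hz3 := h.F1 B'
  obtain ⟨b1, b2, b3, b4, b5, b6, b7⟩ := B
  obtain ⟨d1, d2, d3, d4, d5, d6, d7⟩ := B'
  have hX : C \ C' ⊆ S := Finset.sdiff_subset.trans b1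
  have hl : ∀ u ∈ C \ C', ∀ w ∈ S, w ∉ C \ C' → G.Adj u w → (u = c ∧ w = z) ∨ (u = z' ∧ w = c') := by
    intro u hu w hw hwX ha
    rw [Finset.mem_sdiff] at hu hwX
    by_cases hwC : w ∈ C
    · have hwC' : w ∈ C' := by tauto
      have := d7 w hwC' u (b1 hu.1) hu.2 ha.symm
      tauto
    · left; exact b7 u hu.1 w hw hwC ha
  by_cases hv : ∃ v ∈ C \ C', v ≠ c ∧ v ≠ z'
  · obtain ⟨v, hv, v1, v2⟩ := hv
    refine sat_three h.tt hX hv (fun w hw ha => ?_)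
    by_contra hh
    have := hl v hv w hw hh ha
    tauto
  · push Not at hv
    exfalso
    by_cases hz : z' ∈ C \ C'
    · have : (nb G S z').card ≤ 2 := by
        by_cases e : z' = c
        · apply nb_le_two (a := c') (b := z)
          intro w hw ha
          have q1 := hl z' hz w hw
          have q2 := hv w
          have q3 := ha.ne
          by_cases hwX : w ∈ C \ C'
          · grind
          · have := q1 hwX ha
            tauto
        · apply nb_le_two (a := c') (b := c)
          intro w hw ha
          have q1 := hl z' hz w hw
          have q2 := hv w
          have q3 := ha.ne
          by_cases hwX : w ∈ C \ C'
          · grind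
          · have := q1 hwX ha
            tauto
      omega
    · obtain ⟨u, hu⟩ := hne
      have huc : ∀ w ∈ C \ C', w = c := by
        intro w hw
        by_contra hh
        exact hz ((hv w hw hh) ▸ hw)
      have : (nb G S u).card ≤ 1 := by
        apply nb_le_one (a := z)
        intro w hw ha
        by_cases hwX : w ∈ C \ C'
        · exact absurd ((huc u hu).trans (huc w hwX).symm) ha.ne
        · rcases hl u hu w hw hwX ha with q | q
          · exact q.2
          · exact absurd (q.1 ▸ hu) hz
      have := h.tt.two (hX hu)
      omega

lemma Ctx.T1 (h : Ctx G S) {C C' : Finset V} {c z c' z' : V} (B : Block G S C c z)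
    (B' : Block G S C' c' z') (hne : (C ∩ C').Nonempty) (h2 : (C ∩ C').card ≤ 2) :
    c ∈ C' ∧ c' ∈ C ∧ z' ∈ C := by
  obtain ⟨b1, b2, b3, b4, b5, b6, b7⟩ := B
  obtain ⟨d1, d2, d3, d4, d5, d6, d7⟩ := B'
  have hX : C ∩ C' ⊆ S := Finset.inter_subset_left.trans b1
  by_contra hcon
  by_cases hc : c ∈ C'
  · have := small h.tt hX hne (u0 := c) (w0 := z) (by
      intro u hu w hw hwX ha
      rw [Finset.mem_inter] at hu hwX
      by_cases hwC : w ∈ C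
      · have := d7 u hu.2 w hw (by tauto) ha
        grind
      · exact b7 u hu.1 w hw hwC ha)
    omega
  · have := small h.tt hX hne (u0 := c') (w0 := z') (by
      intro u hu w hw hwX ha
      rw [Finset.mem_inter] at hu hwX
      by_cases hwC : w ∈ C
      · exact d7 u hu.2 w hw (by tauto) ha
      · have := b7 u hu.1 w hw hwC ha
        grind)
    omega

lemma Ctx.disj (h : Ctx G S) {C C' : Finset V} {c z c' z' : V} (B : Block G S C c z)
    (B' : Block G S C' c' z') (hCC : C ≠ C') : Disjoint C C' := by
  by_contra hd
  have hne : (C ∩ C').Nonempty := by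
    rw [Finset.nonempty_iff_ne_empty]
    intro e
    exact hd (Finset.disjoint_iff_inter_eq_empty.2 e)
  have hcC := B.2.1
  have hcC' := B'.2.1
  have n1 : (C \ C').Nonempty := by
    rw [Finset.sdiff_nonempty]
    intro hs
    exact hCC (Finset.eq_of_subset_of_card_le hs (by omega))
  have n2 : (C' \ C).Nonempty := by
    rw [Finset.sdiff_nonempty]
    intro hs
    exact hCC (Finset.eq_of_subset_of_card_le hs (by omega)).symm
  have t2 := h.T2big B B' n1
  have s1 := Finset.card_sdiff_add_card_inter C C'
  have s2 := Finset.card_sdiff_add_card_inter C' C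
  have s3 := Finset.card_union_add_card_inter C C'
  have s4 : (C' ∩ C).card = (C ∩ C').card := by rw [Finset.inter_comm]
  have hpos := Finset.card_pos.2 hne
  obtain ⟨q1, q2, q3⟩ := h.T1 B B' hne (by omega)
  obtain ⟨r1, r2, r3⟩ := h.T1 B' B (by rwa [Finset.inter_comm]) (by omega)
  have hp := B.hp2 h.tt
  have hst := fun u => B'.nb_eq (u := u)
  have b1 := B.1
  have b3 := B.2.2.1
  have b5 := B.2.2.2.2.1
  have b7 := B.2.2.2.2.2.2
  have d1 := B'.1
  have d3 := B'.2.2.1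
  have d5 := B'.2.2.2.2.1
  have d7 := B'.2.2.2.2.2.2
  have hcl : Closed G S (C ∪ C') := by
    refine ⟨Finset.union_subset b1 d1, ?_⟩
    intro u hu w hw ha
    rw [Finset.mem_union] at hu ⊢
    by_contra hh
    push Not at hh
    rcases hu with hu | hu
    · have := b7 u hu w hw hh.1 ha
      exact hh.2 (this.2 ▸ r3)
    · have := d7 u hu w hw hh.2 ha
      exact hh.1 (this.2 ▸ q3)
  have hins : insert z C ⊆ C ∪ C' := by
    intro u hu; rw [Finset.mem_insert] at hu; rw [Finset.mem_union]; grind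
  by_cases hcard : (C ∩ C').card = 2
  · exact h.closed hcl ⟨c, by simp [b3]⟩ (hp.mono hins) (by omega)
  have hcard1 : (C ∩ C').card = 1 := by omega
  have hT1 : ∀ u ∈ C, u ∈ C' → u = c := by
    intro u hu hu'
    exact Finset.card_le_one.1 hcard1.le u (Finset.mem_inter.2 ⟨hu, hu'⟩) c (Finset.mem_inter.2 ⟨b3, q1⟩)
  have hcc : c' = c := hT1 c' q2 d3
  have hT3 : ((C' \ C).erase z).card = 3 := by
    rw [Finset.card_erase_of_mem (Finset.mem_sdiff.2 ⟨r3, b5⟩)]; omega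
  obtain ⟨p, q, r, e1, e2, e3, he⟩ := Finset.card_eq_three.1 hT3
  have key : ∀ u ∈ (C' \ C).erase z, ∃ w ∈ (C' \ C).erase z, G.Adj u w := by
    intro u hu
    rw [Finset.mem_erase, Finset.mem_sdiff] at hu
    have h2 : 2 ≤ (nb G C' u).card := by
      rw [hst u hu.2.1 (by rintro rfl; exact hu.2.2 q2)]; exact h.tt.two (d1 hu.2.1)
    obtain ⟨a, b, f1, f2, f3, f4, f5⟩ := two_nb h2
    have aux : ∀ w ∈ C', G.Adj u w → w ∉ C := by
      intro w hw ha hwC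
      have := b7 w hwC u (d1 hu.2.1) hu.2.2 ha.symm
      exact hu.1 this.2
    by_cases haz : a = z
    · exact ⟨b, by rw [Finset.mem_erase, Finset.mem_sdiff]; exact ⟨by grind, f3, aux b f3 f5⟩, f5⟩
    · exact ⟨a, by rw [Finset.mem_erase, Finset.mem_sdiff]; exact ⟨haz, f2, aux a f2 f4⟩, f4⟩
  have hp1 : HP G ((C' \ C).erase z) 1 := by
    rw [he] at key ⊢
    simp only [Finset.mem_insert, Finset.mem_singleton, exists_eq_or_imp, exists_eq_left, forall_eq_or_imp, forall_eq, SimpleGraph.irrefl, false_or, or_false] at key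
    exact three_conn e1 e2 e3 key.1 key.2.1 key.2.2
  have := hp.union hp1 (by
    rw [Finset.disjoint_left]
    intro u hu hu'
    rw [Finset.mem_insert] at hu
    rw [Finset.mem_erase, Finset.mem_sdiff] at hu'
    tauto)
  refine h.closed (k := 2 + 1) hcl ⟨c, by simp [b3]⟩ (this.mono ?_) (by omega)
  refine Finset.union_subset hins ?_
  intro u hu
  rw [Finset.mem_erase, Finset.mem_sdiff] at hu
  simp [hu.2.1]

lemma Block.uniq {C : Finset V} {c z c' z' : V} (B : Block G S C c z) (B' : Block G S C c' z') : 
    c = c' ∧ z = z' :=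
  B'.2.2.2.2.2.2 c B.2.2.1 z B.2.2.2.1 B.2.2.2.2.1 B.2.2.2.2.2.1

/-- attached vertices are not in blocks -/
lemma Ctx.ZU (h : Ctx G S) {C C' : Finset V} {c z c' z' : V} (B : Block G S C c z)
    (B' : Block G S C' c' z') : z ∉ C' := by
  intro hz
  have hCC : C ≠ C' := by rintro rfl; exact B.2.2.2.2.1 hz
  have hd := h.disj B B' hCC
  have hp := B.hp2 h.tt
  have h2 := B'.2.1
  obtain ⟨b1, b2, b3, b4, b5, b6, b7⟩ := B
  have hcn : c ∉ C' := Finset.disjoint_left.1 hd b3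
  have hz' : z = c' ∧ c = z' := B'.2.2.2.2.2.2 z hz c (b1 b3) hcn b6.symm
  obtain ⟨rfl, rfl⟩ := hz'
  have hst := fun u => B'.nb_eq (u := u)
  have hnc := B'.nb_c
  obtain ⟨d1, d2, d3, d4, d5, d6, d7⟩ := B'
  have hcl : Closed G S (C ∪ C') := by
    refine ⟨Finset.union_subset b1 d1, ?_⟩
    intro u hu w hw ha
    rw [Finset.mem_union] at hu ⊢
    by_contra hh
    push Not at hh
    rcases hu with hu | hu
    · have := b7 u hu w hw hh.1 ha
      exact hh.2 (this.2 ▸ hz)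
    · have := d7 u hu w hw hh.2 ha
      exact hh.1 (this.2 ▸ b3)
  have hp1 : HP G (C'.erase z) 1 := by
    have hcard : (nb G C' z).card ≤ 2 := by
      rw [hnc, Finset.card_erase_of_mem (mem_nb.2 ⟨d4, d6⟩)]
      have := h.tt z b4
      omega
    have : ∃ u ∈ C'.erase z, ¬ G.Adj z u := by
      by_contra hh
      push Not at hh
      have : C'.erase z ⊆ nb G C' z := fun u hu => mem_nb.2 ⟨Finset.mem_of_mem_erase hu, hh u hu⟩
      have := Finset.card_le_card this
      rw [Finset.card_erase_of_mem hz] at this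
      omega
    obtain ⟨u, hu, hnu⟩ := this
    rw [Finset.mem_erase] at hu
    have h2 : 2 ≤ (nb G C' u).card := by
      rw [hst u hu.2 hu.1]; exact h.tt.two (d1 hu.2)
    obtain ⟨a, b, f1, f2, f3, f4, f5⟩ := two_nb h2
    have haz : a ≠ z := by rintro rfl; exact hnu f4.symm
    have hbz : b ≠ z := by rintro rfl; exact hnu f5.symm
    exact HP.one f4.symm f5 f1 (by simp [haz, f2]) (by simp [hu]) (by simp [hbz, f3])
  have := hp.union hp1 (by
    rw [Finset.disjoint_left]
    intro u hu hu'
    rw [Finset.mem_insert] at hu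
    rw [Finset.mem_erase] at hu'
    rcases hu with hu | hu
    · exact hu'.1 hu
    · exact Finset.disjoint_left.1 hd hu hu'.2)
  refine h.closed (k := 2 + 1) hcl ⟨c, by simp [b3]⟩ (this.mono ?_) ?_
  · intro u hu
    simp only [Finset.mem_union, Finset.mem_insert, Finset.mem_erase] at hu ⊢
    grind
  · have := Finset.card_union_le C C'
    omega

end Pk

namespace Pk
open Finset Classical

def InU {V : Type} [Fintype V] (G : SimpleGraph V) (S : Finset V) (v : V) : Prop :=
  ∃ C c z, Block G S C c z ∧ v ∈ C
def InZ {V : Type} [Fintype V] (G : SimpleGraph V) (S : Finset V) (v : V) : Prop :=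
  ∃ C c, Block G S C c v
def InA {V : Type} [Fintype V] (G : SimpleGraph V) (S : Finset V) (v : V) : Prop :=
  v ∈ S ∧ (nb G S v).card = 3 ∧ ¬ InU G S v ∧ ¬ InZ G S v
def InD {V : Type} [Fintype V] (G : SimpleGraph V) (S : Finset V) (v : V) : Prop :=
  v ∈ S ∧ (nb G S v).card = 2 ∧ ¬ InU G S v
def InM {V : Type} [Fintype V] (G : SimpleGraph V) (S : Finset V) (v : V) : Prop :=
  InD G S v ∧ ∀ w ∈ S, G.Adj v w → InA G S w

variable {V : Type} {G : SimpleGraph V} {S T : Finset V}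
variable [Fintype V]

lemma Ctx.F2 (h : Ctx G S) {x w : V} (hx : InA G S x) (hw : w ∈ S) (ha : G.Adj x w) : InD G S w := by
  obtain ⟨x1, x2, x3, x4⟩ := hx
  refine ⟨hw, ?_, ?_⟩
  · refine (h.tt w hw).resolve_right fun h3 => ?_
    obtain ⟨C, B | B⟩ := h.bb x1 hw ha x2 h3
    · exact x3 ⟨C, x, w, B, B.2.2.1⟩
    · exact x4 ⟨C, w, B⟩
  · rintro ⟨C, c, z, B, hwC⟩
    by_cases hxC : x ∈ C
    · exact x3 ⟨C, c, z, B, hxC⟩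
    · have := B.2.2.2.2.2.2 w hwC x x1 hxC ha.symm
      exact x4 ⟨C, c, this.2 ▸ B⟩

lemma Ctx.F3 (h : Ctx G S) {d w : V} (hd : InD G S d) (hw : w ∈ S) (ha : G.Adj d w) :
    InD G S w ∨ InA G S w ∨ InZ G S w := by
  have hU : ¬ InU G S w := by
    rintro ⟨C, c, z, B, hwC⟩
    by_cases hdC : d ∈ C
    · exact hd.2.2 ⟨C, c, z, B, hdC⟩
    · have := (B.2.2.2.2.2.2 w hwC d hd.1 hdC ha.symm).2
      have := h.F1 B
      have := hd.2.1
      grind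
  by_cases hZ : InZ G S w
  · tauto
  · rcases h.tt w hw with q | q
    · left; exact ⟨hw, q, hU⟩
    · right; left; exact ⟨hw, q, hU, hZ⟩

lemma Ctx.F3b (h : Ctx G S) {d a b : V} (hd : InD G S d) (ha : InD G S a) (hb : InD G S b) 
    (h1 : G.Adj d a) (h2 : G.Adj d b) (hne : a ≠ b) : False :=
  hd.2.2 (h.run ha.1 hd.1 hb.1 ha.2.1 hd.2.1 hb.2.1 h1.symm h2 hne)

lemma InA_ne_InD {x d : V} (hx : InA G S x) (hd : InD G S d) : x ≠ d := by
  rintro rfl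
  have := hx.2.1
  have := hd.2.1
  omega

lemma Ctx.NRa (h : Ctx G S) {x p1 p2 p3 y1 y2 y3 : V} {C : Finset V}
    (hnd : [x, p1, p2, p3].Nodup) (hx : x ∈ S) (h1 : p1 ∈ S) (h2 : p2 ∈ S) (h3 : p3 ∈ S)
    (e2 : G.Adj x p2) (e3 : G.Adj x p3)
    (hy1 : y1 ∈ S) (f1 : G.Adj p1 y1)
    (nx : ∀ w ∈ S, G.Adj x w → w = p1 ∨ w = p2 ∨ w = p3)
    (n1 : ∀ w ∈ S, G.Adj p1 w → w = x ∨ w = y1)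
    (n2 : ∀ w ∈ S, G.Adj p2 w → w = x ∨ w = y2)
    (n3 : ∀ w ∈ S, G.Adj p3 w → w = x ∨ w = y3)
    (hn : y1 ≠ y2) (hn' : y1 ≠ y3) (hn'' : y2 ≠ y3)
    (g1 : (nb G S y1).card = 3) (g2 : (nb G S y2).card = 3) (g3 : (nb G S y3).card = 3)
    (hC : Closed G (S \ {x, p1, p2, p3}) C) (h5 : C.card = 5) (hyC : y1 ∈ C) : False := by
  have hnd' := hnd
  simp at hnd
  have key : ∀ v ∈ S, v ∉ ({x, p1, p2, p3} : Finset V) → ∀ w ∈ ({x, p1, p2, p3} : Finset V), G.Adj v w →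
      (v = y1 ∧ w = p1) ∨ (v = y2 ∧ w = p2) ∨ (v = y3 ∧ w = p3) := by
    intro v hv hvW w hw ha
    simp only [Finset.mem_insert, Finset.mem_singleton, not_or] at hvW hw
    have ha' := ha.symm
    rcases hw with rfl | rfl | rfl | rfl
    · have := nx v hv ha'; grind
    · have := n1 v hv ha'; grind
    · have := n2 v hv ha'; grind
    · have := n3 v hv ha'; grind
  have hdeg : ∀ v ∈ S, v ∉ ({x, p1, p2, p3} : Finset V) → (∃ w ∈ ({x, p1, p2, p3} : Finset V), G.Adj v w) →
      (nb G S v).card = 3 ∧ ∃ w0, ∀ w ∈ ({x, p1, p2, p3} : Finset V), G.Adj v w → w = w0 := by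
    rintro v hv hvW ⟨w, hw, ha⟩
    refine ⟨?_, w, fun w' hw' ha' => ?_⟩
    · have := key v hv hvW w hw ha; grind
    · have := key v hv hvW w hw ha
      have := key v hv hvW w' hw' ha'
      grind
  have htt := sdiff_TT h.tt hdeg
  have hCS := hC.1
  have hnotW : ∀ u ∈ C, u ∈ S ∧ u ∉ ({x, p1, p2, p3} : Finset V) := fun u hu => Finset.mem_sdiff.1 (hCS hu)
  have hnb : ∀ u ∈ C, nb G C u = nb G (S \ {x, p1, p2, p3}) u := by
    intro u hu
    apply Finset.Subset.antisymm (nb_sub hCS u)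
    intro w hw
    rw [mem_nb] at hw
    exact mem_nb.2 ⟨hC.2 u hu w hw.1 hw.2, hw.2⟩
  have hp1C : p1 ∉ C := fun hh => (hnotW p1 hh).2 (by simp)
  have hp : HP G (insert p1 C) 2 := by
    refine blk h5 hyC hp1C f1.symm ?_ ?_ ?_
    · intro u hu _
      rw [hnb u hu]; exact htt.two (hCS hu)
    · have : 2 ≤ (nb G C y1).card := by rw [hnb y1 hyC]; exact htt.two (hCS hyC)
      obtain ⟨a, b, q1, q2, q3, q4, q5⟩ := two_nb this
      exact ⟨a, q2, q4⟩
    · have : nb G C y1 ⊆ (nb G S y1).erase p1 := by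
        intro w hw
        rw [mem_nb] at hw
        rw [Finset.mem_erase, mem_nb]
        exact ⟨fun e => hp1C (e ▸ hw.1), (hnotW w hw.1).1, hw.2⟩
      have := Finset.card_le_card this
      rw [Finset.card_erase_of_mem (mem_nb.2 ⟨h1, f1.symm⟩), g1] at this
      exact this
  have hT : HP G ({p2, x, p3} : Finset V) 1 := HP.one e2.symm e3 (by grind) (by simp) (by simp) (by simp)
  have hU := hp.union hT (by
    rw [Finset.disjoint_left]
    intro u hu hu'
    simp only [Finset.mem_insert, Finset.mem_singleton] at hu hu'
    rcases hu with rfl | hu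
    · grind
    · have := (hnotW u hu).2
      simp only [Finset.mem_insert, Finset.mem_singleton] at this
      tauto)
  have hcard := Finset.card_union_le C {x, p1, p2, p3}
  rw [card4 hnd'] at hcard
  have key2 : ∀ v ∈ S, v ∉ C ∪ ({x, p1, p2, p3} : Finset V) → ∀ w ∈ C ∪ ({x, p1, p2, p3} : Finset V), G.Adj v w →
      (v = y2 ∧ w = p2) ∨ (v = y3 ∧ w = p3) := by
    intro v hv hvW w hw ha
    rw [Finset.mem_union] at hvW hw
    push Not at hvW
    rcases hw with hw | hw
    · exact absurd (hC.2 w hw v (Finset.mem_sdiff.2 ⟨hv, hvW.2⟩) ha.symm) hvW.1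
    · have := key v hv hvW.2 w hw ha
      grind
  refine h.rl (W := C ∪ {x, p1, p2, p3}) (Y := {y2, y3}) (k := 2 + 1) ?_ ⟨x, by simp⟩ (hU.mono ?_) ?_ ?_ ?_
  · apply Finset.union_subset (hCS.trans Finset.sdiff_subset)
    intro u hu; simp at hu; grind
  · intro u hu
    simp only [Finset.mem_union, Finset.mem_insert, Finset.mem_singleton] at hu ⊢
    tauto
  · rintro v hv hvW ⟨w, hw, ha⟩
    refine ⟨?_, w, fun w' hw' ha' => ?_⟩
    · have := key2 v hv hvW w hw ha; grind
    · have := key2 v hv hvW w hw ha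
      have := key2 v hv hvW w' hw' ha'
      grind
  · intro v hv hvW w hw ha
    have := key2 v hv hvW w hw ha
    simp; tauto
  · have := Finset.card_le_two (a := y2) (b := y3)
    omega

lemma Ctx.NR (h : Ctx G S) {x p1 p2 p3 y1 y2 y3 : V}
    (hnd : [x, p1, p2, p3].Nodup) (hx : x ∈ S) (h1 : p1 ∈ S) (h2 : p2 ∈ S) (h3 : p3 ∈ S)
    (e1 : G.Adj x p1) (e2 : G.Adj x p2) (e3 : G.Adj x p3)
    (hy1 : y1 ∈ S) (f1 : G.Adj p1 y1) (hy2 : y2 ∈ S) (f2 : G.Adj p2 y2) (hy3 : y3 ∈ S) (f3 : G.Adj p3 y3)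
    (nx : ∀ w ∈ S, G.Adj x w → w = p1 ∨ w = p2 ∨ w = p3)
    (n1 : ∀ w ∈ S, G.Adj p1 w → w = x ∨ w = y1)
    (n2 : ∀ w ∈ S, G.Adj p2 w → w = x ∨ w = y2)
    (n3 : ∀ w ∈ S, G.Adj p3 w → w = x ∨ w = y3)
    (hn : y1 ≠ y2) (hn' : y1 ≠ y3) (hn'' : y2 ≠ y3)
    (g1 : (nb G S y1).card = 3) (g2 : (nb G S y2).card = 3) (g3 : (nb G S y3).card = 3) : False := by
  have hnd' := hnd
  simp at hnd
  have key : ∀ v ∈ S, v ∉ ({x, p1, p2, p3} : Finset V) → ∀ w ∈ ({x, p1, p2, p3} : Finset V), G.Adj v w →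
      (v = y1 ∧ w = p1) ∨ (v = y2 ∧ w = p2) ∨ (v = y3 ∧ w = p3) := by
    intro v hv hvW w hw ha
    simp only [Finset.mem_insert, Finset.mem_singleton, not_or] at hvW hw
    have ha' := ha.symm
    rcases hw with rfl | rfl | rfl | rfl
    · have := nx v hv ha'; grind
    · have := n1 v hv ha'; grind
    · have := n2 v hv ha'; grind
    · have := n3 v hv ha'; grind
  refine h.rl0 (W := {x, p1, p2, p3}) (Y := ∅) (k := 1) ?_ ⟨x, by simp⟩
    (HP.one e1.symm e2 (by grind) (by simp) (by simp) (by simp)) ?_ ?_ (by rw [card4 hnd']; simp)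
  · intro u hu; simp at hu; grind
  · rintro v hv hvW ⟨w, hw, ha⟩
    refine ⟨?_, w, fun w' hw' ha' => ?_⟩
    · have := key v hv hvW w hw ha; grind
    · have := key v hv hvW w hw ha
      have := key v hv hvW w' hw' ha'
      grind
  · intro C hC h5
    exfalso
    by_cases c1 : y1 ∈ C
    · exact h.NRa hnd' hx h1 h2 h3 e2 e3 hy1 f1 nx n1 n2 n3 hn hn' hn'' g1 g2 g3 hC h5 c1
    by_cases c2 : y2 ∈ C
    · have E : ({x, p1, p2, p3} : Finset V) = {x, p2, p1, p3} := by ext; simp; tauto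
      rw [E] at hC
      exact h.NRa (by simp; grind) hx h2 h1 h3 e1 e3 hy2 f2 (by grind) n2 n1 n3 hn.symm hn'' hn' g2 g1 g3 hC h5 c2
    by_cases c3 : y3 ∈ C
    · have E : ({x, p1, p2, p3} : Finset V) = {x, p3, p1, p2} := by ext; simp; tauto
      rw [E] at hC
      exact h.NRa (by simp; grind) hx h3 h1 h2 e1 e2 hy3 f3 (by grind) n3 n1 n2 hn'.symm hn''.symm hn g3 g1 g2 hC h5 c3
    refine h.no5 C ⟨hC.1.trans Finset.sdiff_subset, ?_⟩ h5
    intro u hu w hw ha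
    have huS := Finset.mem_sdiff.1 (hC.1 hu)
    by_cases hwW : w ∈ ({x, p1, p2, p3} : Finset V)
    · have := key u huS.1 huS.2 w hwW ha
      grind
    · exact hC.2 u hu w (Finset.mem_sdiff.2 ⟨hw, hwW⟩) ha

set_option maxHeartbeats 1000000 in
lemma Ctx.DR (h : Ctx G S) {x m m' p y z : V} (hx : InA G S x) (hy : InA G S y) (hz : InA G S z)
    (hm : InD G S m) (hm' : InD G S m') (hp : InD G S p) (hmm : m ≠ m') (hmp : m ≠ p) (hmp' : m' ≠ p)
    (e1 : G.Adj x m) (e2 : G.Adj x m') (e3 : G.Adj x p) (f1 : G.Adj m y) (f2 : G.Adj m' y) (f3 : G.Adj p z)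
    (nx : ∀ w ∈ S, G.Adj x w → w = m ∨ w = m' ∨ w = p)
    (n1 : ∀ w ∈ S, G.Adj m w → w = x ∨ w = y)
    (n2 : ∀ w ∈ S, G.Adj m' w → w = x ∨ w = y)
    (n3 : ∀ w ∈ S, G.Adj p w → w = x ∨ w = z) (hxy : x ≠ y) (hxz : x ≠ z) (hyz : y ≠ z) : False := by
  obtain ⟨q, q1, q2, hqS, qa, ny⟩ := nb3'' hy.2.1 hm.1 f1.symm hm'.1 f2.symm hmm
  have hq := h.F2 hy hqS qa
  have xm := InA_ne_InD hx hm
  have xm' := InA_ne_InD hx hm'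
  have xp := InA_ne_InD hx hp
  have xq := InA_ne_InD hx hq
  have ym := InA_ne_InD hy hm
  have ym' := InA_ne_InD hy hm'
  have yp := InA_ne_InD hy hp
  have yq := InA_ne_InD hy hq
  have zm := InA_ne_InD hz hm
  have zm' := InA_ne_InD hz hm'
  have zp := InA_ne_InD hz hp
  have zq := InA_ne_InD hz hq
  have hqp : p ≠ q := by
    rintro rfl
    have := n3 y hy.1 qa.symm; grind
  have hna : ¬ G.Adj p q := by
    intro ha
    have := n3 q hqS ha; grind
  have hnd : [x, m, m', y].Nodup := by simp; grind
  have key : ∀ v ∈ S, v ∉ ({x, m, m', y} : Finset V) → ∀ w ∈ ({x, m, m', y} : Finset V), G.Adj v w →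
      (v = p ∧ w = x) ∨ (v = q ∧ w = y) := by
    intro v hv hvW w hw ha
    simp only [Finset.mem_insert, Finset.mem_singleton, not_or] at hvW hw
    have ha' := ha.symm
    rcases hw with rfl | rfl | rfl | rfl
    · have := nx v hv ha'; grind
    · have := n1 v hv ha'; grind
    · have := n2 v hv ha'; grind
    · have := ny v hv ha'; grind
  have hxS := hx.1
  have hyS := hy.1
  have hmS := hm.1
  have hmS' := hm'.1
  have hWS : ({x, m, m', y} : Finset V) ⊆ S := by
    intro u hu; simp only [Finset.mem_insert, Finset.mem_singleton] at hu
    rcases hu with rfl | rfl | rfl | rfl <;> assumption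
  have hpW : p ∉ ({x, m, m', y} : Finset V) := by simp; grind
  have hqW : q ∉ ({x, m, m', y} : Finset V) := by simp; grind
  refine h.contract (W := {x, m, m', y}) (Y := ∅) (x := p) (y := q) (px := x) (py := y) hWS
    (by rw [card4 hnd]; simp) hp.1 hpW hqS hqW hqp hna (by simp) (by simp) e3.symm qa.symm key
    (HP.one e1.symm e2 hmm (by simp) (by simp) (by simp)) ?_ ?_ (by rw [card4 hnd]; simp)
  · intro w hw hwW hwp hwq hor
    simp only [Finset.mem_insert, Finset.mem_singleton, not_or] at hwW
    rcases hor with ho | ho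
    · refine HP.two ho.symm e3.symm hwW.1 f1 f2.symm hmm ?_ ?_ ?_
      · intro u hu; simp at hu ⊢; tauto
      · intro u hu; simp at hu ⊢; tauto
      · simp; grind
    · refine HP.two ho.symm qa.symm hwW.2.2.2 e1.symm e2 hmm ?_ ?_ ?_
      · intro u hu; simp at hu ⊢; tauto
      · intro u hu; simp at hu ⊢; tauto
      · simp; grind
  · intro C hC h5
    exfalso
    have hnotW : ∀ u ∈ C, u ∈ S ∧ u ∉ ({x, m, m', y} : Finset V) := fun u hu => Finset.mem_sdiff.1 (hC.1 hu)
    have hpq : p ∈ C ↔ q ∈ C := by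
      constructor
      · intro hh
        refine hC.2 p hh q (Finset.mem_sdiff.2 ⟨hqS, hqW⟩) ?_
        simp only [SimpleGraph.sup_adj, SimpleGraph.edge_adj]
        simp [hqp]
      · intro hh
        refine hC.2 q hh p (Finset.mem_sdiff.2 ⟨hp.1, hpW⟩) ?_
        simp only [SimpleGraph.sup_adj, SimpleGraph.edge_adj]
        simp [hqp, hqp.symm]
    have hcl : ∀ u ∈ C, ∀ w ∈ S, G.Adj u w → w ∈ C ∨ (u = p ∧ w = x) ∨ (u = q ∧ w = y) := by
      intro u hu w hw ha
      by_cases hwW : w ∈ ({x, m, m', y} : Finset V)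
      · right; exact key u (hnotW u hu).1 (hnotW u hu).2 w hwW ha
      · left; exact hC.2 u hu w (Finset.mem_sdiff.2 ⟨hw, hwW⟩) (Or.inl ha)
    by_cases hpC : p ∈ C
    swap
    · refine h.no5 C ⟨hC.1.trans Finset.sdiff_subset, ?_⟩ h5
      intro u hu w hw ha
      have := hcl u hu w hw ha
      grind
    have hqC := hpq.1 hpC
    obtain ⟨a, b, c, k1, k2, k3, k4, k5, k6, k7, k8, k9, ha, hb, hc, hall⟩ := get5 h5 hpC hqC hqp
    have aux : ∀ u ∈ C, u ≠ p → u ≠ q → ∃ w ∈ C, w ≠ p ∧ w ≠ q ∧ G.Adj u w := by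
      intro u hu up uq
      have huS := (hnotW u hu).1
      have hin : ∀ w ∈ S, G.Adj u w → w ∈ C := by
        intro w hw ha
        have := hcl u hu w hw ha
        tauto
      by_contra hcon
      push Not at hcon
      have hpq' : ∀ w ∈ S, G.Adj u w → w = p ∨ w = q := by
        intro w hw ha
        by_contra hh
        push Not at hh
        exact hcon w (hin w hw ha) hh.1 hh.2 ha
      by_cases huz : u = z
      · subst huz
        have := nb_le_two hpq'
        have := hz.2.1
        omega
      · have : (nb G S u).card ≤ 1 := by
          apply nb_le_one (a := q)
          intro w hw ha
          refine (hpq' w hw ha).resolve_left ?_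
          rintro rfl
          have := n3 u huS ha.symm
          have := (hnotW u hu).2
          simp only [Finset.mem_insert, Finset.mem_singleton] at this
          tauto
        have := h.tt.two huS
        omega
    have hT : HP G ({a, b, c} : Finset V) 1 := by
      apply three_conn k1 k2 k3
      · obtain ⟨w, w1, w2, w3, w4⟩ := aux a ha k4 k7
        have := hall w w1; have := w4.ne; grind
      · obtain ⟨w, w1, w2, w3, w4⟩ := aux b hb k5 k8
        have := hall w w1; have := w4.ne; grind
      · obtain ⟨w, w1, w2, w3, w4⟩ := aux c hc k6 k9
        have := hall w w1; have := w4.ne; grind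
    have hT2 : HP G (({x, m, m', y} : Finset V) ∪ {p, q}) 2 := by
      refine HP.two e3.symm e1 hmp.symm f2 qa q2 ?_ ?_ ?_
      · intro u hu; simp at hu ⊢; tauto
      · intro u hu; simp at hu ⊢; tauto
      · simp; grind
    have wa := (hnotW a ha).2
    have wb := (hnotW b hb).2
    have wc := (hnotW c hc).2
    have hU := hT2.union hT (by
      rw [Finset.disjoint_left]
      intro u hu hu'
      rw [Finset.mem_union] at hu
      rcases hu with hu | hu
      · simp only [Finset.mem_insert, Finset.mem_singleton] at hu'
        rcases hu' with rfl | rfl | rfl <;> tauto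
      · simp only [Finset.mem_insert, Finset.mem_singleton] at hu hu'
        grind)
    refine h.closed (W := C ∪ {x, m, m', y}) (k := 2 + 1) ⟨?_, ?_⟩ ⟨x, by simp⟩ (hU.mono ?_) ?_
    · exact Finset.union_subset (hC.1.trans Finset.sdiff_subset) hWS
    · intro u hu w hw ha
      rw [Finset.mem_union] at hu ⊢
      by_cases hwW : w ∈ ({x, m, m', y} : Finset V)
      · exact Or.inr hwW
      left
      rcases hu with hu | hu
      · rcases hcl u hu w hw ha with q | q | q
        · exact q
        · exact absurd (by simp [q.2]) hwW
        · exact absurd (by simp [q.2]) hwW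
      · have := key w hw hwW u hu ha.symm
        rcases this with q | q
        · exact q.1 ▸ hpC
        · exact q.1 ▸ hqC
    · intro u hu
      simp only [Finset.mem_union, Finset.mem_insert, Finset.mem_singleton] at hu ⊢
      grind
    · have := Finset.card_union_le C {x, m, m', y}
      rw [card4 hnd] at this
      omega

lemma Ctx.Hdeg (h : Ctx G S) {x p1 p2 p3 : V} (hx : InA G S x) (h1 : InM G S p1) (h2 : InM G S p2)
    (h3 : InM G S p3) (h12 : p1 ≠ p2) (h13 : p1 ≠ p3) (h23 : p2 ≠ p3)
    (e1 : G.Adj x p1) (e2 : G.Adj x p2) (e3 : G.Adj x p3) : False := by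
  have nx : ∀ w ∈ S, G.Adj x w → w = p1 ∨ w = p2 ∨ w = p3 := by
    obtain ⟨c, c1, c2, c3, c4, c5⟩ := nb3'' hx.2.1 h1.1.1 e1 h2.1.1 e2 h12
    have := c5 p3 h3.1.1 e3
    grind
  obtain ⟨y1, y1x, hy1, f1, n1⟩ := nb2' h1.1.2.1 hx.1 e1.symm
  obtain ⟨y2, y2x, hy2, f2, n2⟩ := nb2' h2.1.2.1 hx.1 e2.symm
  obtain ⟨y3, y3x, hy3, f3, n3⟩ := nb2' h3.1.2.1 hx.1 e3.symm
  have A1 := h1.2 y1 hy1 f1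
  have A2 := h2.2 y2 hy2 f2
  have A3 := h3.2 y3 hy3 f3
  by_cases c12 : y1 = y2
  · subst c12
    by_cases c13 : y1 = y3
    · subst c13
      have ny : ∀ w ∈ S, G.Adj y1 w → w = p1 ∨ w = p2 ∨ w = p3 := by
        obtain ⟨c, c1, c2, c3, c4, c5⟩ := nb3'' A1.2.1 h1.1.1 f1.symm h2.1.1 f2.symm h12
        have := c5 p3 h3.1.1 f3.symm
        grind
      have xm := e1.ne
      have xm' := e2.ne
      have xp := e3.ne
      have ym := f1.ne
      have ym' := f2.ne
      have yp := f3.ne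
      refine h.no5 {x, p1, p2, p3, y1} ⟨?_, ?_⟩ (card5 (by simp; grind))
      · have a1 := h1.1.1
        have a2 := h2.1.1
        have a3 := h3.1.1
        have a4 := hx.1
        intro u hu; simp only [Finset.mem_insert, Finset.mem_singleton] at hu
        rcases hu with rfl | rfl | rfl | rfl | rfl <;> assumption
      · intro u hu w hw ha
        simp only [Finset.mem_insert, Finset.mem_singleton] at hu ⊢
        rcases hu with rfl | rfl | rfl | rfl | rfl
        · have := nx w hw ha; tauto
        · have := n1 w hw ha; tauto
        · have := n2 w hw ha; tauto
        · have := n3 w hw ha; tauto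
        · have := ny w hw ha; tauto
    · exact h.DR hx A1 A3 h1.1 h2.1 h3.1 h12 h13 h23 e1 e2 e3 f1 f2 f3 nx n1 n2 n3 y1x.symm y3x.symm c13
  by_cases c13 : y1 = y3
  · subst c13
    exact h.DR hx A1 A2 h1.1 h3.1 h2.1 h13 h12 h23.symm e1 e3 e2 f1 f3 f2
      (fun w hw ha => by have := nx w hw ha; tauto) n1 n3 n2 y1x.symm y2x.symm c12
  by_cases c23 : y2 = y3
  · subst c23
    exact h.DR hx A2 A1 h2.1 h3.1 h1.1 h23 h12.symm h13.symm e2 e3 e1 f2 f3 f1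
      (fun w hw ha => by have := nx w hw ha; tauto) n2 n3 n1 y2x.symm y1x.symm (Ne.symm c12)
  refine h.NR (by simp; have := e1.ne; have := e2.ne; have := e3.ne; tauto) hx.1 h1.1.1 h2.1.1 h3.1.1 e1 e2 e3 hy1 f1 hy2 f2 hy3 f3 nx n1 n2 n3
    c12 c13 c23 A1.2.1 A2.2.1 A3.2.1

end Pk

namespace Pk
open Finset Classical
variable {V : Type} {G : SimpleGraph V} {S T : Finset V}
variable [Fintype V]

lemma Ctx.hall (h : Ctx G S) : ∃ l : V → V, (∀ m, InM G S m → l m ∈ S ∧ G.Adj m (l m)) ∧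
    ∀ m m', InM G S m → InM G S m' → l m = l m' → m = m' := by
  have := (Finset.all_card_le_biUnion_card_iff_exists_injective
    (fun m : {m // InM G S m} => nb G S m.1)).1 (by
    intro s
    have := Finset.card_mul_le_card_mul (s := s) (t := s.biUnion (fun m : {m // InM G S m} => nb G S m.1))
      (fun m x => G.Adj m.1 x) (m := 2) (n := 2) (by
        intro m hm
        rw [← m.2.1.2.1]
        apply Finset.card_le_card
        intro w hw
        rw [Finset.mem_bipartiteAbove]
        exact ⟨Finset.mem_biUnion.2 ⟨m, hm, hw⟩, (mem_nb.1 hw).2⟩) (by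
        intro x hx
        by_contra hcon
        push Not at hcon
        obtain ⟨a, b, c, ha, hb, hc, hab, hac, hbc⟩ := Finset.two_lt_card_iff.1 hcon
        rw [Finset.mem_bipartiteBelow] at ha hb hc
        obtain ⟨m, hm, hmx⟩ := Finset.mem_biUnion.1 hx
        have hA := m.2.2 x (mem_nb.1 hmx).1 (mem_nb.1 hmx).2
        exact h.Hdeg hA a.2 b.2 c.2 (fun e => hab (Subtype.ext e)) (fun e => hac (Subtype.ext e))
          (fun e => hbc (Subtype.ext e)) ha.2.symm hb.2.symm hc.2.symm)
    omega)
  obtain ⟨f, f1, f2⟩ := this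
  refine ⟨fun m => if hm : InM G S m then f ⟨m, hm⟩ else m, ?_, ?_⟩
  · intro m hm
    have := mem_nb.1 (f2 ⟨m, hm⟩)
    simpa [hm] using this
  · intro m m' hm hm' e
    simp only [hm, hm', dif_pos] at e
    have := f1 e
    exact congrArg Subtype.val this

def Rel (G : SimpleGraph V) (S : Finset V) (l : V → V) (v w : V) : Prop :=
  (∃ C c, Block G S C c w ∧ v ∈ C) ∨
  ((InA G S v ∨ InZ G S v) ∧ w = v) ∨
  (InM G S v ∧ w ∈ S ∧ G.Adj v w ∧ InA G S w ∧ w ≠ l v) ∨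
  (InD G S v ∧ ¬ InM G S v ∧ w ∈ S ∧ G.Adj v w ∧ InA G S w) ∨
  (InD G S v ∧ (∀ u ∈ S, G.Adj v u → ¬ InA G S u) ∧ w ∈ S ∧ G.Adj v w ∧ InZ G S w)

lemma Ctx.rel_ex (h : Ctx G S) {l : V → V} (hl : ∀ m, InM G S m → l m ∈ S ∧ G.Adj m (l m)) {v : V}
    (hv : v ∈ S) : ∃ w, Rel G S l v w := by
  by_cases hU : InU G S v
  · obtain ⟨C, c, z, B, hC⟩ := hU
    exact ⟨z, Or.inl ⟨C, c, B, hC⟩⟩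
  rcases h.tt v hv with h2 | h3
  · have hD : InD G S v := ⟨hv, h2, hU⟩
    by_cases hM : InM G S v
    · obtain ⟨l1, l2⟩ := hl v hM
      obtain ⟨b, b1, b2, b3, b4⟩ := nb2' h2 l1 l2
      exact ⟨b, Or.inr (Or.inr (Or.inl ⟨hM, b2, b3, hM.2 b b2 b3, b1⟩))⟩
    by_cases hA : ∃ w ∈ S, G.Adj v w ∧ InA G S w
    · obtain ⟨w, w1, w2, w3⟩ := hA
      exact ⟨w, Or.inr (Or.inr (Or.inr (Or.inl ⟨hD, hM, w1, w2, w3⟩)))⟩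
    · push Not at hA
      obtain ⟨a, b, q1, q2, q3, q4, q5, q6⟩ := nb2 h2
      rcases h.F3 hD q2 q4 with r | r | r
      · rcases h.F3 hD q3 q5 with r' | r' | r'
        · exact (h.F3b hD r r' q4 q5 q1).elim
        · exact absurd r' (hA b q3 q5)
        · exact ⟨b, Or.inr (Or.inr (Or.inr (Or.inr ⟨hD, hA, q3, q5, r'⟩)))⟩
      · exact absurd r (hA a q2 q4)
      · exact ⟨a, Or.inr (Or.inr (Or.inr (Or.inr ⟨hD, hA, q2, q4, r⟩)))⟩
  · refine ⟨v, Or.inr (Or.inl ⟨?_, rfl⟩)⟩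
    by_cases hZ : InZ G S v
    · exact Or.inr hZ
    · exact Or.inl ⟨hv, h3, hU, hZ⟩

def Good (G : SimpleGraph V) (W : Finset V) : Prop := ∃ k, HP G W k ∧ W.card ≤ 4 * k

lemma Ctx.fibA (h : Ctx G S) {l g : V → V} (hl : ∀ m, InM G S m → l m ∈ S ∧ G.Adj m (l m))
    (hinj : ∀ m m', InM G S m → InM G S m' → l m = l m' → m = m') (hg : ∀ v ∈ S, Rel G S l v (g v))
    {x : V} (hx : InA G S x) : Good G (S.filter (fun v => g v = x)) := by
  have key : ∀ n ∈ S, G.Adj x n → g n = x ∨ (InM G S n ∧ l n = x) := by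
    intro n hn ha
    have hD := h.F2 hx hn ha
    by_contra hcon
    push Not at hcon
    rcases hg n hn with ⟨C, c, B, hC⟩ | ⟨q, _⟩ | ⟨q1, q2, q3, q4, q5⟩ | ⟨q1, q2, q3, q4, q5⟩ | ⟨q1, q2, q3, q4, q5⟩
    · exact hD.2.2 ⟨C, c, _, B, hC⟩
    · rcases q with q | ⟨C, c, B⟩
      · exact InA_ne_InD q hD rfl
      · have := h.F1 B
        have := hD.2.1
        omega
    · obtain ⟨l1, l2⟩ := hl n q1
      have := nb2'' hD.2.1 q2 q3 l1 l2 q5 x hx.1 ha.symm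
      rcases this with e | e
      · exact hcon.1 e.symm
      · exact hcon.2 q1 e.symm
    · have := nb2'' hD.2.1 q3 q4 hx.1 ha.symm hcon.1
      refine q2 ⟨q1, fun w hw hwa => ?_⟩
      rcases this w hw hwa with e | e
      · rw [e]; exact q5
      · rw [e]; exact hx
    · exact q2 x hx.1 ha.symm hx
  refine ⟨1, ?_, ?_⟩
  · obtain ⟨a, b, c, n1, n2, n3, ha, hb, hc, a1, a2, a3, _⟩ := nb3 hx.2.1
    have hxx : g x = x := by
      rcases hg x hx.1 with ⟨C, c, B, hC⟩ | ⟨q, q'⟩ | ⟨q1, q2, q3, q4, q5⟩ | ⟨q1, q2, q3, q4, q5⟩ | ⟨q1, q2, q3, q4, q5⟩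
      · exact absurd ⟨C, c, _, B, hC⟩ hx.2.2.1
      · exact q'
      · exact absurd rfl (InA_ne_InD hx q1.1)
      · exact absurd rfl (InA_ne_InD hx q1)
      · exact absurd rfl (InA_ne_InD hx q1)
    have fin : ∀ a b, a ∈ S → b ∈ S → G.Adj x a → G.Adj x b → a ≠ b → g a = x → g b = x →
        HP G (S.filter (fun v => g v = x)) 1 := by
      intro a b ha hb a1 a2 hne ga gb
      exact HP.one a1.symm a2 hne (by simp [ha, ga]) (by simp [hx.1, hxx]) (by simp [hb, gb])
    have ka := key a ha a1
    have kb := key b hb a2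
    have kc := key c hc a3
    by_cases ga : g a = x
    · by_cases gb : g b = x
      · exact fin a b ha hb a1 a2 n1 ga gb
      · have kb := kb.resolve_left gb
        refine fin a c ha hc a1 a3 n2 ga (kc.resolve_right fun kc => n3 ?_)
        exact hinj b c kb.1 kc.1 (kb.2.trans kc.2.symm)
    · have ka := ka.resolve_left ga
      refine fin b c hb hc a2 a3 n3 (kb.resolve_right fun kb => n1 ?_) (kc.resolve_right fun kc => n2 ?_)
      · exact hinj a b ka.1 kb.1 (ka.2.trans kb.2.symm)
      · exact hinj a c ka.1 kc.1 (ka.2.trans kc.2.symm)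
  · have : S.filter (fun v => g v = x) ⊆ insert x (nb G S x) := by
      intro v hv
      rw [Finset.mem_filter] at hv
      rw [Finset.mem_insert, mem_nb]
      have := hg v hv.1
      rw [hv.2] at this
      rcases this with ⟨C, c, B, hC⟩ | ⟨q, q'⟩ | ⟨q1, q2, q3, q4, q5⟩ | ⟨q1, q2, q3, q4, q5⟩ | ⟨q1, q2, q3, q4, q5⟩
      · exact absurd ⟨C, c, B⟩ hx.2.2.2
      · exact Or.inl q'.symm
      · exact Or.inr ⟨hv.1, q3.symm⟩
      · exact Or.inr ⟨hv.1, q4.symm⟩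
      · exact Or.inr ⟨hv.1, q4.symm⟩
    have h1 := Finset.card_le_card this
    have h2 := Finset.card_insert_le x (nb G S x)
    have := hx.2.1
    omega

lemma Ctx.fibZ (h : Ctx G S) {l g : V → V} (hg : ∀ v ∈ S, Rel G S l v (g v))
    {z : V} (hz : InZ G S z) : Good G (S.filter (fun v => g v = z)) := by
  obtain ⟨C1, c1, B1⟩ := hz
  have hzS := B1.2.2.2.1
  have hz3 := h.F1 B1
  have hzD : ¬ InD G S z := fun q => by have := q.2.1; omega
  have c1S := B1.1 B1.2.2.1
  obtain ⟨n2, n3, m1, m2, m3, hn2, hn3, a2, a3, nz⟩ := nb3' hz3 c1S B1.2.2.2.2.2.1.symm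
  have gz : g z = z := by
    rcases hg z hzS with ⟨C, c, B, hC⟩ | ⟨q, q'⟩ | ⟨q1, q2, q3, q4, q5⟩ | ⟨q1, q2, q3, q4, q5⟩ | ⟨q1, q2, q3, q4, q5⟩
    · exact absurd hC (h.ZU B1 B)
    · exact q'
    · exact absurd q1.1 hzD
    · exact absurd q1 hzD
    · exact absurd q1 hzD
  have gC : ∀ C c, Block G S C c z → ∀ v ∈ C, g v = z := by
    intro C c B v hv
    have hU : InU G S v := ⟨C, c, z, B, hv⟩
    rcases hg v (B.1 hv) with ⟨C', c', B', hC'⟩ | ⟨q, q'⟩ | ⟨q1, q2, q3, q4, q5⟩ | ⟨q1, q2, q3, q4, q5⟩ | ⟨q1, q2, q3, q4, q5⟩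
    · by_cases e : C' = C
      · subst e
        exact (B'.uniq B).2
      · exact absurd hv (Finset.disjoint_left.1 (h.disj B' B e) hC')
    · rcases q with q | ⟨C', c', B'⟩
      · exact absurd hU q.2.2.1
      · exact absurd hv (h.ZU B' B)
    · exact absurd hU q1.1.2.2
    · exact absurd hU q1.2.2
    · exact absurd hU q1.2.2
  let W := S.filter (fun v => g v = z)
  let Q : V → V → Prop := fun n v => (v = n ∧ InD G S n) ∨ ∃ C, Block G S C n z ∧ v ∈ C
  have hQ : ∀ n, ∃ k, HP G (W.filter (Q n)) k ∧ (W.filter (Q n)).card ≤ 4 * k + 1 := by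
    intro n
    by_cases hC : ∃ C, Block G S C n z
    · obtain ⟨C, B⟩ := hC
      have : W.filter (Q n) = C := by
        ext v
        simp only [W, Q, Finset.mem_filter]
        constructor
        · rintro ⟨_, ⟨_, q⟩ | ⟨C', B', q⟩⟩
          · exact absurd ⟨C, n, z, B, B.2.2.1⟩ q.2.2
          · by_cases e : C' = C
            · exact e ▸ q
            · exact absurd B.2.2.1 (Finset.disjoint_left.1 (h.disj B' B e) B'.2.2.1)
        · intro hv
          exact ⟨⟨B.1 hv, gC C n B v hv⟩, Or.inr ⟨C, B, hv⟩⟩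
      rw [this]
      exact ⟨1, B.hp1 h.tt, by rw [B.2.1]⟩
    · refine ⟨0, HP.zero, ?_⟩
      have : W.filter (Q n) ⊆ {n} := by
        intro v hv
        rw [Finset.mem_filter] at hv
        rcases hv.2 with q | ⟨C, B, _⟩
        · simp [q.1]
        · exact absurd ⟨C, B⟩ hC
      simpa using Finset.card_le_card this
  have dQ : ∀ n n', n ≠ n' → ∀ v, Q n v → Q n' v → False := by
    rintro n n' hne v (⟨q1, q2⟩ | ⟨C, B, q⟩) (⟨r1, r2⟩ | ⟨C', B', r⟩)
    · exact hne (q1.symm.trans r1)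
    · exact q2.2.2 ⟨C', n', z, B', q1 ▸ r⟩
    · exact r2.2.2 ⟨C, n, z, B, r1 ▸ q⟩
    · by_cases e : C = C'
      · subst e
        exact hne (B.uniq B').1
      · exact Finset.disjoint_left.1 (h.disj B B' e) q r
  have d1 : ∀ n, n ≠ c1 → ∀ v ∈ insert z C1, ¬ Q n v := by
    intro n hn v hv hq
    rw [Finset.mem_insert] at hv
    rcases hv with rfl | hv
    · rcases hq with ⟨q1, q2⟩ | ⟨C, B, q⟩
      · exact hzD (q1 ▸ q2)
      · exact B.2.2.2.2.1 q
    · exact dQ n c1 hn v hq (Or.inr ⟨C1, B1, hv⟩)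
  obtain ⟨k2, p2, s2⟩ := hQ n2
  obtain ⟨k3, p3, s3⟩ := hQ n3
  have U1 := (B1.hp2 h.tt).union p2 (by
    rw [Finset.disjoint_left]
    intro v hv hv'
    exact d1 n2 m1.symm v hv (Finset.mem_filter.1 hv').2)
  have U2 := U1.union p3 (by
    rw [Finset.disjoint_left]
    intro v hv hv'
    rw [Finset.mem_union] at hv
    have q := (Finset.mem_filter.1 hv').2
    rcases hv with hv | hv
    · exact d1 n3 m2.symm v hv q
    · exact dQ n2 n3 m3 v (Finset.mem_filter.1 hv).2 q)
  refine ⟨2 + k2 + k3, U2.mono ?_, ?_⟩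
  · refine Finset.union_subset (Finset.union_subset ?_ (Finset.filter_subset _ _)) (Finset.filter_subset _ _)
    intro v hv
    rw [Finset.mem_insert] at hv
    rw [Finset.mem_filter]
    rcases hv with rfl | hv
    · exact ⟨hzS, gz⟩
    · exact ⟨B1.1 hv, gC C1 c1 B1 v hv⟩
  · have hsub : W ⊆ insert z C1 ∪ W.filter (Q n2) ∪ W.filter (Q n3) := by
      intro v hvW
      have hv := Finset.mem_filter.1 hvW
      have hR := hg v hv.1
      rw [hv.2] at hR
      simp only [Finset.mem_union, Finset.mem_insert, Finset.mem_filter]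
      rcases hR with ⟨C, c, B, hC⟩ | ⟨q, q'⟩ | ⟨q1, q2, q3, q4, q5⟩ | ⟨q1, q2, q3, q4, q5⟩ | ⟨q1, q2, q3, q4, q5⟩
      · rcases nz c (B.1 B.2.2.1) B.2.2.2.2.2.1.symm with rfl | rfl | rfl
        · by_cases e : C = C1
          · subst e; tauto
          · exact absurd B1.2.2.1 (Finset.disjoint_left.1 (h.disj B B1 e) B.2.2.1)
        · exact Or.inl (Or.inr ⟨hvW, Or.inr ⟨C, B, hC⟩⟩)
        · exact Or.inr ⟨hvW, Or.inr ⟨C, B, hC⟩⟩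
      · exact Or.inl (Or.inl (Or.inl q'.symm))
      · exact absurd ⟨C1, c1, B1⟩ q4.2.2.2
      · exact absurd ⟨C1, c1, B1⟩ q5.2.2.2
      · rcases nz v hv.1 q4.symm with rfl | rfl | rfl
        · exact absurd ⟨C1, v, z, B1, B1.2.2.1⟩ q1.2.2
        · exact Or.inl (Or.inr ⟨hvW, Or.inl ⟨rfl, q1⟩⟩)
        · exact Or.inr ⟨hvW, Or.inl ⟨rfl, q1⟩⟩
    have t1 := Finset.card_le_card hsub
    have t2 := Finset.card_union_le (insert z C1 ∪ W.filter (Q n2)) (W.filter (Q n3))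
    have t3 := Finset.card_union_le (insert z C1) (W.filter (Q n2))
    have t4 := Finset.card_insert_le z C1
    have := B1.2.1
    change W.card ≤ _
    omega

lemma Ctx.elim (h : Ctx G S) : False := by
  obtain ⟨l, hl, hinj⟩ := h.hall
  have : ∀ v, ∃ w, v ∈ S → Rel G S l v w := by
    intro v
    by_cases hv : v ∈ S
    · obtain ⟨w, hw⟩ := h.rel_ex hl hv
      exact ⟨w, fun _ => hw⟩
    · exact ⟨v, fun q => absurd q hv⟩
  choose g hg using this
  have hfib : ∀ x, Good G (S.filter (fun v => g v = x)) := by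
    intro x
    by_cases hx : ∃ v ∈ S, g v = x
    · obtain ⟨v, hv, rfl⟩ := hx
      have hA : InA G S (g v) ∨ InZ G S (g v) := by
        rcases hg v hv with ⟨C, c, B, hC⟩ | ⟨q, q'⟩ | ⟨q1, q2, q3, q4, q5⟩ | ⟨q1, q2, q3, q4, q5⟩ | ⟨q1, q2, q3, q4, q5⟩
        · exact Or.inr ⟨C, c, B⟩
        · rw [q']; exact q
        · exact Or.inl q4
        · exact Or.inl q5
        · exact Or.inr q5
      rcases hA with hA | hZ
      · exact h.fibA hl hinj hg hA
      · exact h.fibZ hg hZ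
    · push Not at hx
      refine ⟨0, HP.zero, ?_⟩
      rw [Finset.filter_eq_empty_iff.2 (fun v hv => hx v hv)]
      simp
  have hI : ∀ I : Finset V, Good G (S.filter (fun v => g v ∈ I)) := by
    intro I
    induction I using Finset.induction_on with
    | empty => exact ⟨0, HP.zero, by simp⟩
    | insert a I ha ih =>
      obtain ⟨k, k1, k2⟩ := ih
      obtain ⟨j, j1, j2⟩ := hfib a
      have e : S.filter (fun v => g v ∈ insert a I) =
          S.filter (fun v => g v = a) ∪ S.filter (fun v => g v ∈ I) := by
        ext v; simp only [Finset.mem_filter, Finset.mem_union, Finset.mem_insert]; tauto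
      have d : Disjoint (S.filter (fun v => g v = a)) (S.filter (fun v => g v ∈ I)) := by
        rw [Finset.disjoint_left]
        intro v hv hv'
        rw [Finset.mem_filter] at hv hv'
        exact ha (hv.2 ▸ hv'.2)
      refine ⟨j + k, ?_, ?_⟩
      · rw [e]; exact j1.union k1 d
      · rw [e, Finset.card_union_of_disjoint d]; omega
  obtain ⟨k, k1, k2⟩ := hI Finset.univ
  simp at k1 k2
  have := h.bad k k1
  omega

lemma main_ind (n : ℕ) : ∀ (G : SimpleGraph V) (S Y : Finset V), S.card + G.edgeSet.ncard = n →
    TT G S → (∀ C, Closed G S C → C.card = 5 → ∃ y ∈ C, y ∈ Y) →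
    ∃ k, HP G S k ∧ S.card ≤ 4 * k + Y.card := by
  induction n using Nat.strong_induction_on with
  | _ n ih =>
    intro G S Y hn tt hit
    by_cases h5 : ∃ C, Closed G S C ∧ C.card = 5
    · obtain ⟨C, hC, hc⟩ := h5
      obtain ⟨y, hyC, hyY⟩ := hit C hC hc
      have hcl : ∀ v ∈ S, v ∉ C → ∀ w ∈ C, ¬ G.Adj v w := fun v hv hvC w hw ha =>
        hvC (hC.2 w hw v hv ha.symm)
      have htt : TT G (S \ C) := sdiff_TT tt (by
        rintro v hv hvC ⟨w, hw, ha⟩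
        exact absurd ha (hcl v hv hvC w hw))
      have hcard := Finset.card_sdiff_add_card_eq_card hC.1
      obtain ⟨k, k1, k2⟩ := ih _ (by omega) G (S \ C) (Y.erase y) rfl htt (by
        intro C' hC' hc'
        obtain ⟨u, hu, huY⟩ := hit C' ⟨hC'.1.trans Finset.sdiff_subset, by
          intro u hu w hw ha
          have huS := Finset.mem_sdiff.1 (hC'.1 hu)
          refine hC'.2 u hu w (Finset.mem_sdiff.2 ⟨hw, fun hwC => ?_⟩) ha
          exact hcl u huS.1 huS.2 w hwC ha⟩ hc'
        refine ⟨u, hu, Finset.mem_erase.2 ⟨?_, huY⟩⟩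
        rintro rfl
        exact (Finset.mem_sdiff.1 (hC'.1 hu)).2 hyC)
      obtain ⟨a, b, q1, q2, q3, q4, q5⟩ := two_nb (tt.two (hC.1 hyC))
      have hp : HP G C 1 := HP.one q4.symm q5 q1 (hC.2 y hyC a q2 q4) hyC (hC.2 y hyC b q3 q5)
      have := k1.union hp Finset.sdiff_disjoint
      rw [Finset.sdiff_union_of_subset hC.1] at this
      have hYc := Finset.card_erase_add_one hyY
      exact ⟨k + 1, this, by omega⟩
    · push Not at h5
      by_contra hcon
      push Not at hcon
      have : Ctx G S := ⟨tt, h5, fun G' S' Y' hlt => ih _ (by omega) G' S' Y' rfl, fun k hk => by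
        have := hcon k hk
        omega⟩
      exact this.elim

end Pk

namespace Pk
open Finset Classical
variable {V : Type} {G : SimpleGraph V}

lemma IsP3.sub {t : Finset V} (h : IsP3 G t) : ∃ H : G.Subgraph, H.IsKEdgePath 2 ∧ H.verts = (t : Set V) := by
  obtain ⟨a, b, c, h1, h2, h3, rfl⟩ := h
  refine ⟨(SimpleGraph.Walk.cons h1 (SimpleGraph.Walk.cons h2 SimpleGraph.Walk.nil)).toSubgraph,
    ⟨a, c, _, ?_, rfl, rfl⟩, ?_⟩
  · have := h1.ne
    have := h2.ne
    simp [SimpleGraph.Walk.isPath_def]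
    tauto
  · ext u
    simp
    try tauto

variable [Fintype V]

lemma HP.lam {k : ℕ} (h : HP G Finset.univ k) : k ≤ G.lambdaK 2 := by
  obtain ⟨P, p1, p2, p3⟩ := h
  have : ∀ t, ∃ H : G.Subgraph, t ∈ P → H.IsKEdgePath 2 ∧ H.verts = (t : Set V) := by
    intro t
    by_cases ht : t ∈ P
    · obtain ⟨H, hH⟩ := (p1 t ht).1.sub
      exact ⟨H, fun _ => hH⟩
    · exact ⟨⊥, fun q => absurd q ht⟩
  choose f hf using this
  unfold SimpleGraph.lambdaK
  apply le_csSup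
  · refine ⟨Fintype.card G.Subgraph, ?_⟩
    rintro n ⟨Q, _, _, rfl⟩
    exact Finset.card_le_univ Q
  · refine ⟨P.image f, ?_, ?_, ?_⟩
    · intro H hH
      obtain ⟨t, ht, rfl⟩ := Finset.mem_image.1 hH
      exact (hf t ht).1
    · intro H hH H' hH' hne
      obtain ⟨t, ht, rfl⟩ := Finset.mem_image.1 (Finset.mem_coe.1 hH)
      obtain ⟨t', ht', rfl⟩ := Finset.mem_image.1 (Finset.mem_coe.1 hH')
      show Disjoint (f t).verts (f t').verts
      rw [(hf t ht).2, (hf t' ht').2, Finset.disjoint_coe]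
      exact p2 t ht t' ht' (fun e => hne (e ▸ rfl))
    · rw [Finset.card_image_of_injOn, p3]
      intro t ht t' ht' e
      have h1 := (hf t ht).2
      have h2 := (hf t' ht').2
      have e' : f t = f t' := e
      rw [e', h2] at h1
      exact (Finset.coe_injective h1).symm

lemma comp_sub {C : Finset V} (hC : Closed G Finset.univ C) {v w : V} (hv : v ∈ C) (h : G.Reachable v w) : w ∈ C := by
  obtain ⟨p⟩ := h
  induction p with
  | nil => exact hv
  | cons ha _ ih => exact ih (hC.2 _ hv _ (Finset.mem_univ _) ha)

lemma no_closed (tt : TT G Finset.univ) (hcomp : ∀ c : G.ConnectedComponent, c.supp.ncard ≠ 5) (C : Finset V)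
    (hC : Closed G Finset.univ C) (h5 : C.card = 5) : False := by
  let K : V → Finset V := fun v => Finset.univ.filter (fun w => G.Reachable v w)
  have hKs : ∀ v, ((K v : Finset V) : Set V) = (G.connectedComponentMk v).supp := by
    intro v
    ext w
    simp only [K, Finset.coe_filter, Finset.mem_univ, true_and, Set.mem_ofPred_eq,
      SimpleGraph.ConnectedComponent.mem_supp_iff, SimpleGraph.ConnectedComponent.eq]
    exact ⟨fun q => q.symm, fun q => q.symm⟩
  have hK3 : ∀ v, 3 ≤ (K v).card := by
    intro v
    refine sat_three tt (v := v) (Finset.subset_univ _) (by simp [K]) ?_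
    intro w _ ha
    simp only [K, Finset.mem_filter, Finset.mem_univ, true_and]
    exact ha.reachable
  have hKC : ∀ v ∈ C, K v ⊆ C := by
    intro v hv w hw
    simp only [K, Finset.mem_filter, Finset.mem_univ, true_and] at hw
    exact comp_sub hC hv hw
  have hK5 : ∀ v, (K v).card ≠ 5 := by
    intro v
    have := hcomp (G.connectedComponentMk v)
    rwa [← hKs, Set.ncard_coe_finset] at this
  obtain ⟨v, hv⟩ := Finset.card_pos.1 (show 0 < C.card by omega)
  by_cases hall : C ⊆ K v
  · have := Finset.Subset.antisymm hall (hKC v hv)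
    exact hK5 v (this ▸ h5)
  · obtain ⟨u, hu, huK⟩ := Finset.not_subset.1 hall
    have hd : Disjoint (K v) (K u) := by
      rw [Finset.disjoint_left]
      intro w hw hw'
      simp only [K, Finset.mem_filter, Finset.mem_univ, true_and] at hw hw' huK
      exact huK (hw.trans hw'.symm)
    have := Finset.card_le_card (Finset.union_subset (hKC v hv) (hKC u hu))
    rw [Finset.card_union_of_disjoint hd] at this
    have := hK3 v
    have := hK3 u
    omega

end Pk

/-- Let `G` be a finite simple graph in which every vertex has degree 2 or 3, and
suppose `G` has no connected component with exactly 5 vertices.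
Then `λ(G) ≥ v(G)/4`. -/
theorem stmt_0 {V : Type} [Fintype V] (G : SimpleGraph V) [DecidableRel G.Adj]
    (hdeg : ∀ v : V, G.degree v = 2 ∨ G.degree v = 3)
    (hcomp : ∀ c : G.ConnectedComponent, c.supp.ncard ≠ 5) :
    (G.lambdaK 2 : ℚ) ≥ (Fintype.card V : ℚ) / 4 := by
  have tt : Pk.TT G Finset.univ := by
    intro v _
    have : (Pk.nb G Finset.univ v).card = G.degree v := by
      rw [← SimpleGraph.card_neighborFinset_eq_degree]
      congr 1
      ext w
      simp [Pk.nb]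
    rw [this]
    exact hdeg v
  obtain ⟨k, k1, k2⟩ := Pk.main_ind _ G Finset.univ ∅ rfl tt
    (fun C hC h5 => (Pk.no_closed tt hcomp C hC h5).elim)
  have hk := k1.lam
  simp only [Finset.card_univ, Finset.card_empty, add_zero] at k2
  have : Fintype.card V ≤ 4 * G.lambdaK 2 := by omega
  have h' : (Fintype.card V : ℚ) ≤ 4 * (G.lambdaK 2 : ℚ) := by exact_mod_cast this
  linarith
end

section
/- Let s ≥ 4 be an integer and let G be a finite simple graph in which every vertex has degree at least 2 and at most s. Then λ(G) ≥ v(G)/(s+1). -/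
namespace PP

open Classical in
/-- neighbours -/
noncomputable def nb {V : Type} [Fintype V] (G : SimpleGraph V) (v : V) : Finset V :=
  Finset.univ.filter (fun w => G.Adj v w)

theorem mem_nb {V : Type} [Fintype V] (G : SimpleGraph V) (v w : V) :
    w ∈ nb G v ↔ G.Adj v w := by simp [nb]

/-- flatten triples -/
def flat {V : Type} (L : List (V × V × V)) : List V :=
  L.flatMap (fun t => [t.1, t.2.1, t.2.2])

/-- packing -/
def Pack {V : Type} (G : SimpleGraph V) (L : List (V × V × V)) : Prop :=
  (∀ t ∈ L, G.Adj t.1 t.2.1 ∧ G.Adj t.2.1 t.2.2) ∧ (flat L).Nodup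

theorem path_pack {V : Type} (G : SimpleGraph V) : ∀ p : List V, p.IsChain G.Adj → p.Nodup →
    ∃ L, Pack G L ∧ (∀ x ∈ flat L, x ∈ p) ∧ L.length = p.length / 3
  | [], _, _ => ⟨[], by simp [Pack, flat], by simp [flat], by simp⟩
  | [a], _, _ => ⟨[], by simp [Pack, flat], by simp [flat], by simp⟩
  | [a, b], _, _ => ⟨[], by simp [Pack, flat], by simp [flat], by simp⟩
  | a :: b :: c :: r, hc, hn => by
    have hc' : r.IsChain G.Adj := by
      have := hc.tail.tail.tail
      simpa using this
    have hn' : r.Nodup := by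
      simp at hn; tauto
    obtain ⟨L, ⟨h1, h2⟩, h3, h4⟩ := path_pack G r hc' hn'
    refine ⟨(a, b, c) :: L, ⟨?_, ?_⟩, ?_, ?_⟩
    · intro t ht
      simp only [List.mem_cons] at ht
      rcases ht with rfl | ht
      · simp at hc; exact ⟨hc.1, hc.2.1⟩
      · exact h1 t ht
    · have e : flat ((a, b, c) :: L) = a :: b :: c :: flat L := by simp [flat]
      rw [e]
      simp only [List.nodup_cons, List.mem_cons, not_or] at hn ⊢
      refine ⟨⟨hn.1.1, hn.1.2.1, fun h => hn.1.2.2 (h3 _ h)⟩, ⟨hn.2.1.1, fun h => hn.2.1.2 (h3 _ h)⟩,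
        fun h => hn.2.2.1 (h3 _ h), h2⟩
    · have e : flat ((a, b, c) :: L) = a :: b :: c :: flat L := by simp [flat]
      rw [e]
      intro x hx
      simp only [List.mem_cons] at hx ⊢
      rcases hx with h | h | h | h
      · simp [h]
      · simp [h]
      · simp [h]
      · simp [h3 _ h]
    · simp [h4]; omega

/-- growing paths -/
structure Good {V : Type} (G : SimpleGraph V) (a : V) (l : List V) (b : V) : Prop where
  chain : (a :: (l ++ [b])).IsChain G.Adj
  nodup : (a :: (l ++ [b])).Nodup
  closed : ∀ v ∈ l, ∀ u, G.Adj v u → u ∈ a :: (l ++ [b])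
  ua : ∀ u u', u ∉ a :: (l ++ [b]) → u' ∉ a :: (l ++ [b]) → G.Adj a u → G.Adj a u' → u = u'
  ub : ∀ u u', u ∉ a :: (l ++ [b]) → u' ∉ a :: (l ++ [b]) → G.Adj b u → G.Adj b u' → u = u'

theorem Good.rev {V : Type} {G : SimpleGraph V} {a b : V} {l : List V} (h : Good G a l b) :
    Good G b l.reverse a := by
  have e : b :: (l.reverse ++ [a]) = (a :: (l ++ [b])).reverse := by simp
  constructor
  · rw [e, List.isChain_reverse]
    refine h.chain.imp ?_
    intro x y hxy; exact hxy.symm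
  · rw [e, List.nodup_reverse]; exact h.nodup
  · rw [e]; simp only [List.mem_reverse]; exact h.closed
  · rw [e]; simp only [List.mem_reverse]; exact h.ub
  · rw [e]; simp only [List.mem_reverse]; exact h.ua

theorem Good.step {V : Type} {G : SimpleGraph V} {a b w : V} {l : List V} (h : Good G a l b)
    (hw : w ∉ a :: (l ++ [b])) (haw : G.Adj a w)
    (hu : ∀ u u', u ∉ a :: (l ++ [b]) → u' ∉ a :: (l ++ [b]) → G.Adj w u → G.Adj w u' → u = u') :
    Good G w (a :: l) b := by
  have e : w :: ((a :: l) ++ [b]) = w :: (a :: (l ++ [b])) := by simp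
  constructor
  · rw [e, List.isChain_cons_cons]; exact ⟨haw.symm, h.chain⟩
  · rw [e, List.nodup_cons]; exact ⟨hw, h.nodup⟩
  · rw [e]
    intro v hv u hvu
    rcases List.mem_cons.1 hv with rfl | hv
    · by_cases hup : u ∈ v :: (l ++ [b])
      · exact List.mem_cons_of_mem _ hup
      · rw [h.ua u w hup hw hvu haw]; exact List.mem_cons_self
    · exact List.mem_cons_of_mem _ (h.closed v hv u hvu)
  · rw [e]; intro u u' h1 h2
    exact hu u u' (fun h => h1 (List.mem_cons_of_mem _ h)) (fun h => h2 (List.mem_cons_of_mem _ h))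
  · rw [e]; intro u u' h1 h2
    exact h.ub u u' (fun h => h1 (List.mem_cons_of_mem _ h)) (fun h => h2 (List.mem_cons_of_mem _ h))

open Classical in
theorem grow {V : Type} [Fintype V] (G : SimpleGraph V)
    (hG : ∀ v, nb G v = ∅ ∨ 2 ≤ (nb G v).card) : ∀ (n : ℕ) (a : V) (l : List V) (b : V),
    Fintype.card V - l.length = n → Good G a l b → 1 ≤ l.length →
    ∃ p : List V, p.IsChain G.Adj ∧ p.Nodup ∧ 3 ≤ p.length ∧
      ∀ w, w ∉ p → nb G w = ∅ ∨ 2 ≤ ((nb G w).filter (fun x => x ∉ p)).card := by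
  intro n
  induction n using Nat.strong_induction_on with
  | _ n ih =>
  intro a l b hn hg hl
  by_cases hfin : ∀ w, w ∉ a :: (l ++ [b]) → nb G w = ∅ ∨
      2 ≤ ((nb G w).filter (fun x => x ∉ a :: (l ++ [b]))).card
  · exact ⟨_, hg.chain, hg.nodup, by simp; omega, hfin⟩
  · push Not at hfin
    obtain ⟨w, hw, hne, hlt⟩ := hfin
    have hlen := hg.nodup.length_le_card
    simp only [List.length_cons, List.length_append, List.length_nil] at hlen
    have hu : ∀ u u', u ∉ a :: (l ++ [b]) → u' ∉ a :: (l ++ [b]) → G.Adj w u → G.Adj w u' →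
        u = u' := by
      intro u u' h1 h2 h3 h4
      exact Finset.card_le_one.1 (Nat.le_of_lt_succ hlt) u
        (Finset.mem_filter.2 ⟨(mem_nb _ _ _).2 h3, h1⟩) u'
        (Finset.mem_filter.2 ⟨(mem_nb _ _ _).2 h4, h2⟩)
    have h2 : 2 ≤ (nb G w).card := by
      rcases hG w with h | h
      · exact absurd h (Finset.nonempty_iff_ne_empty.1 hne)
      · exact h
    have hex : ∃ x ∈ nb G w, x ∈ a :: (l ++ [b]) := by
      by_contra hcon
      push Not at hcon
      rw [Finset.filter_true_of_mem hcon] at hlt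
      omega
    obtain ⟨x, hx, hxp⟩ := hex
    rw [mem_nb] at hx
    have hxl : x ∉ l := fun h => hw (hg.closed x h w hx.symm)
    have hab : x = a ∨ x = b := by
      simp at hxp; tauto
    rcases hab with rfl | rfl
    · exact ih (Fintype.card V - (x :: l).length) (by simp; omega) w (x :: l) b rfl
        (hg.step hw hx.symm hu) (by simp)
    · have e : x :: (l.reverse ++ [a]) = (a :: (l ++ [x])).reverse := by simp
      refine ih (Fintype.card V - (x :: l.reverse).length) (by simp; omega) w (x :: l.reverse) a rfl
        (hg.rev.step ?_ hx.symm ?_) (by simp)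
      · rw [e, List.mem_reverse]; exact hw
      · rw [e]; simp only [List.mem_reverse]; exact hu

open Classical in
theorem hall {V : Type} [Fintype V] (B : Finset V) (N : V → Finset V) (c : V → ℕ)
    (hw : ∀ b ∈ B, 3 ≤ ∑ a ∈ N b, c a)
    (hc : ∀ a, c a * (B.filter (fun b => a ∈ N b)).card ≤ 2) :
    ∃ (Gd : Finset V) (f g : V → V), Gd ⊆ B ∧
      2 * B.card ≤ 2 * Gd.card + (B.filter (fun b => ∑ a ∈ N b, c a = 3)).card ∧
      (∀ b ∈ Gd, f b ∈ N b ∧ g b ∈ N b) ∧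
      (∀ b ∈ Gd, ∀ b' ∈ Gd, f b ≠ g b' ∧ (f b = f b' → b = b') ∧ (g b = g b' → b = b')) := by
  set T := B.filter (fun b => ∑ a ∈ N b, c a = 3) with hT
  obtain ⟨e, he_lt, he_inj⟩ : ∃ e : V → ℕ, (∀ t ∈ T, e t < T.card) ∧
      (∀ t ∈ T, ∀ t' ∈ T, e t = e t' → t = t') := by
    refine ⟨fun t => if h : t ∈ T then (T.equivFin ⟨t, h⟩ : ℕ) else 0, ?_, ?_⟩
    · intro t ht; simp [ht]
    · intro t ht t' ht' h
      simp [ht, ht'] at h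
      have := T.equivFin.injective (Fin.ext h)
      simpa using this
  let D : V → Finset ℕ := fun b =>
    if b ∈ T ∧ e b / 2 < T.card / 2 then {e b / 2} else ∅
  have hDcard : ∀ d (X : Finset V), (X.filter (fun b => d ∈ D b)).card ≤ 2 := by
    intro d X
    have hsub : ((X.filter (fun b => d ∈ D b)).image e) ⊆ {2*d, 2*d+1} := by
      intro x hx
      simp only [Finset.mem_image, Finset.mem_filter] at hx
      obtain ⟨b, ⟨_, hb⟩, rfl⟩ := hx
      simp only [D] at hb
      split_ifs at hb
      · simp at hb ⊢; omega
      · simp at hb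
    have hinj : Set.InjOn e (X.filter (fun b => d ∈ D b)) := by
      intro x hx y hy hxy
      simp only [Finset.coe_filter, Set.mem_ofPred_eq, D] at hx hy
      have hx2 := hx.2
      have hy2 := hy.2
      split_ifs at hx2 hy2 with h1 h2
      · exact he_inj x h1.1 y h2.1 hxy
      all_goals simp at hx2 hy2
    rw [← Finset.card_image_of_injOn hinj]
    exact (Finset.card_le_card hsub).trans Finset.card_le_two
  let t : B × Bool → Finset (V ⊕ ℕ) := fun i => (N i.1).disjSum (D i.1)
  -- weight bound
  have hwt : ∀ X ⊆ B, 4 * X.card ≤ ∑ b ∈ X, (∑ a ∈ N b, c a + (D b).card) + 1 := by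
    intro X hX
    -- exceptional vertices
    have hexc : (X.filter (fun b => b ∈ T ∧ ¬ (e b / 2 < T.card / 2))).card ≤ 1 := by
      rw [Finset.card_le_one]
      intro x hx y hy
      simp only [Finset.mem_filter] at hx hy
      apply he_inj x hx.2.1 y hy.2.1
      have := he_lt x hx.2.1
      have := he_lt y hy.2.1
      omega
    have h1 : ∑ b ∈ X, 4 ≤ ∑ b ∈ X, ((∑ a ∈ N b, c a + (D b).card) +
        if (b ∈ T ∧ ¬ (e b / 2 < T.card / 2)) then 1 else 0) := by
      apply Finset.sum_le_sum
      intro b hb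
      have h3 := hw b (hX hb)
      by_cases hbT : b ∈ T
      · by_cases hlt : e b / 2 < T.card / 2
        · simp only [D, hbT, hlt]; simp; omega
        · simp only [D, hbT, hlt]; simp; omega
      · have : ∑ a ∈ N b, c a ≠ 3 := fun h => hbT (Finset.mem_filter.2 ⟨hX hb, h⟩)
        omega
    rw [Finset.sum_add_distrib, ← Finset.card_filter] at h1
    simp only [Finset.sum_const, smul_eq_mul] at h1
    omega
  have hwt2 : ∀ X ⊆ B, ∑ b ∈ X, (∑ a ∈ N b, c a + (D b).card) ≤
      2 * ((X.biUnion N).card + (X.biUnion D).card) := by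
    intro X hX
    rw [Finset.sum_add_distrib]
    have h1 : ∑ b ∈ X, ∑ a ∈ N b, c a ≤ 2 * (X.biUnion N).card := by
      have : ∑ b ∈ X, ∑ a ∈ N b, c a = ∑ a ∈ X.biUnion N, ∑ b ∈ X.filter (fun b => a ∈ N b), c a := by
        apply Finset.sum_comm'
        intro x y
        simp only [Finset.mem_filter, Finset.mem_biUnion]
        constructor
        · rintro ⟨h1, h2⟩; exact ⟨⟨h1, h2⟩, x, h1, h2⟩
        · rintro ⟨h1, _⟩; exact h1
      rw [this]
      have : ∑ a ∈ X.biUnion N, ∑ b ∈ X.filter (fun b => a ∈ N b), c a ≤ ∑ a ∈ X.biUnion N, 2 := by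
        apply Finset.sum_le_sum
        intro a _
        rw [Finset.sum_const, smul_eq_mul, mul_comm]
        refine le_trans (Nat.mul_le_mul_left _ (Finset.card_le_card ?_)) (hc a)
        exact Finset.filter_subset_filter _ hX
      refine this.trans ?_
      rw [Finset.sum_const, smul_eq_mul, mul_comm]
    have h2 : ∑ b ∈ X, (D b).card ≤ 2 * (X.biUnion D).card := by
      have : ∑ b ∈ X, (D b).card = ∑ d ∈ X.biUnion D, ∑ b ∈ X.filter (fun b => d ∈ D b), 1 := by
        simp only [Finset.card_eq_sum_ones]
        apply Finset.sum_comm'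
        intro x y
        simp only [Finset.mem_filter, Finset.mem_biUnion]
        constructor
        · rintro ⟨h1, h2⟩; exact ⟨⟨h1, h2⟩, x, h1, h2⟩
        · rintro ⟨h1, _⟩; exact h1
      rw [this]
      have : ∑ d ∈ X.biUnion D, ∑ b ∈ X.filter (fun b => d ∈ D b), 1 ≤ ∑ d ∈ X.biUnion D, 2 := by
        apply Finset.sum_le_sum
        intro d _
        rw [← Finset.card_eq_sum_ones]
        exact hDcard d X
      refine this.trans ?_
      rw [Finset.sum_const, smul_eq_mul, mul_comm]
    omega
  have hhall : ∀ S : Finset (B × Bool), S.card ≤ (S.biUnion t).card := by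
    intro S
    let X : Finset V := S.image (fun i => (i.1 : V))
    have hXB : X ⊆ B := by
      intro x hx
      simp only [X, Finset.mem_image] at hx
      obtain ⟨i, _, rfl⟩ := hx
      exact i.1.2
    have h1 : S.card ≤ 2 * X.card := by
      have : S.card ≤ (X ×ˢ (Finset.univ : Finset Bool)).card := by
        apply Finset.card_le_card_of_injOn (fun i => ((i.1 : V), i.2))
        · intro i hi
          simp only [Finset.coe_product, Set.mem_prod, X]
          exact ⟨Finset.mem_coe.2 (Finset.mem_image_of_mem _ hi), by simp⟩
        · intro i _ j _ hij
          simp at hij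
          exact Prod.ext hij.1 hij.2
      simpa [mul_comm] using this
    have h2 : (X.biUnion N).disjSum (X.biUnion D) ⊆ S.biUnion t := by
      intro z hz
      simp only [Finset.mem_biUnion, t]
      rcases z with z | z
      · simp only [Finset.inl_mem_disjSum, Finset.mem_biUnion, X, Finset.mem_image] at hz ⊢
        obtain ⟨_, ⟨i, hi, rfl⟩, h⟩ := hz
        exact ⟨i, hi, h⟩
      · simp only [Finset.inr_mem_disjSum, Finset.mem_biUnion, X, Finset.mem_image] at hz ⊢
        obtain ⟨_, ⟨i, hi, rfl⟩, h⟩ := hz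
        exact ⟨i, hi, h⟩
    have h3 := Finset.card_le_card h2
    rw [Finset.card_disjSum] at h3
    have := hwt X hXB
    have := hwt2 X hXB
    omega
  obtain ⟨m, hminj, hmem⟩ := (Finset.all_card_le_biUnion_card_iff_exists_injective t).1 hhall
  -- good ones
  let P : V → Prop := fun b => ∃ h : b ∈ B, (m (⟨b, h⟩, true)).isLeft ∧ (m (⟨b, h⟩, false)).isLeft
  let F : Bool → V → V := fun i b => if h : b ∈ B then
    (match m (⟨b, h⟩, i) with | .inl x => x | .inr _ => b) else b
  have hF : ∀ b (hb : P b) i, m (⟨b, hb.1⟩, i) = Sum.inl (F i b) := by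
    intro b hb i
    have h : (m (⟨b, hb.1⟩, i)).isLeft := by
      cases i
      · exact hb.2.2
      · exact hb.2.1
    obtain ⟨x, hx⟩ := Sum.isLeft_iff.1 h
    simp only [F, hb.1, dif_pos, hx]
  have hbad : (B.filter (fun b => ¬ P b)).card ≤ T.card / 2 := by
    have : ∀ b ∈ B.filter (fun b => ¬ P b), ∃ d ∈ Finset.range (T.card / 2), ∃ h : b ∈ B, ∃ i,
        m (⟨b, h⟩, i) = Sum.inr d := by
      intro b hb
      simp only [Finset.mem_filter] at hb
      obtain ⟨hb, hnP⟩ := hb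
      have : ∃ i, (m (⟨b, hb⟩, i)).isLeft = false := by
        by_contra hcon
        push Not at hcon
        apply hnP
        exact ⟨hb, by simpa using hcon true, by simpa using hcon false⟩
      obtain ⟨i, hi⟩ := this
      have hm := hmem (⟨b, hb⟩, i)
      rcases hd : m (⟨b, hb⟩, i) with x | d
      · rw [hd] at hi; simp at hi
      · rw [hd] at hm
        simp only [t, Finset.inr_mem_disjSum, D] at hm
        split_ifs at hm with h1
        · refine ⟨d, ?_, hb, i, hd⟩
          simp at hm; simp; omega
        · simp at hm
    choose! φ hφ1 hφ2 using this
    rw [← Finset.card_range (T.card / 2)]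
    apply Finset.card_le_card_of_injOn φ
    · intro b hb; exact hφ1 b hb
    · intro b hb b' hb' hbb
      obtain ⟨h, i, hi⟩ := hφ2 b hb
      obtain ⟨h', i', hi'⟩ := hφ2 b' hb'
      have := hminj (hi.trans ((congrArg Sum.inr hbb).trans hi'.symm))
      simp at this
      exact this.1
  refine ⟨B.filter P, F true, F false, Finset.filter_subset _ _, ?_, ?_, ?_⟩
  · have := Finset.card_filter_add_card_filter_not (s := B) P
    omega
  · intro b hb
    have hP : P b := (Finset.mem_filter.1 hb).2
    have h1 := hmem (⟨b, hP.1⟩, true)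
    have h2 := hmem (⟨b, hP.1⟩, false)
    rw [hF b hP] at h1 h2
    simpa [t] using And.intro h1 h2
  · intro b hb b' hb'
    have hP : P b := (Finset.mem_filter.1 hb).2
    have hP' : P b' := (Finset.mem_filter.1 hb').2
    refine ⟨?_, ?_, ?_⟩
    · intro h
      have := hminj ((hF b hP true).trans ((congrArg Sum.inl h).trans (hF b' hP' false).symm))
      simp at this
    · intro h
      have := hminj ((hF b hP true).trans ((congrArg Sum.inl h).trans (hF b' hP' true).symm))
      simpa using this
    · intro h
      have := hminj ((hF b hP false).trans ((congrArg Sum.inl h).trans (hF b' hP' false).symm))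
      simpa using this

open Classical in
theorem base {V : Type} [Fintype V] (s : ℕ) (hs : 4 ≤ s) (G : SimpleGraph V)
    (hG : ∀ v, nb G v = ∅ ∨ (2 ≤ (nb G v).card ∧ (nb G v).card ≤ s))
    (h1 : ∀ u v, G.Adj u v → 3 ≤ (nb G u).card → 3 ≤ (nb G v).card → False)
    (h2 : ∀ y, (nb G y).card = 2 → ∃ x, G.Adj y x ∧ 3 ≤ (nb G x).card) :
    ∃ L, Pack G L ∧ (Finset.univ.filter (fun v => nb G v ≠ ∅)).card ≤ (s + 1) * L.length := by
  set B : Finset V := Finset.univ.filter (fun b => 3 ≤ (nb G b).card) with hB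
  set A : Finset V := Finset.univ.filter (fun b => (nb G b).card = 2) with hA
  set k : V → ℕ := fun a => (B.filter (fun b => a ∈ nb G b)).card with hk
  have memB : ∀ b, b ∈ B ↔ 3 ≤ (nb G b).card := by intro b; simp [hB]
  have memA : ∀ b, b ∈ A ↔ (nb G b).card = 2 := by intro b; simp [hA]
  have hadj : ∀ b ∈ B, ∀ a ∈ nb G b, a ∈ A := by
    intro b hb a ha
    rw [mem_nb] at ha
    rw [memA]
    rw [memB] at hb
    by_contra hcon
    rcases hG a with h | h
    · have : b ∈ nb G a := (mem_nb _ _ _).2 ha.symm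
      rw [h] at this; simp at this
    · exact h1 b a ha hb (by omega)
  have hkle : ∀ a ∈ A, k a ≤ 2 := by
    intro a ha
    rw [memA] at ha
    rw [← ha]
    apply Finset.card_le_card
    intro x hx
    simp only [Finset.mem_filter, mem_nb] at hx ⊢
    exact hx.2.symm
  have hkpos : ∀ a ∈ A, 1 ≤ k a := by
    intro a ha
    rw [memA] at ha
    obtain ⟨x, hx, hx3⟩ := h2 a ha
    apply Finset.card_pos.2
    exact ⟨x, Finset.mem_filter.2 ⟨(memB x).2 hx3, (mem_nb _ _ _).2 hx.symm⟩⟩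
  have hk0 : ∀ a, a ∉ A → k a = 0 := by
    intro a ha
    rw [hk]
    simp only [Finset.card_eq_zero]
    rw [Finset.filter_eq_empty_iff]
    intro b hb hab
    exact ha (hadj b hb a hab)
  have hck : ∀ a ∈ A, (3 - k a) * k a = 2 := by
    intro a ha
    have := hkle a ha
    have := hkpos a ha
    interval_cases k a <;> rfl
  have hc : ∀ a, (3 - k a) * k a ≤ 2 := by
    intro a
    by_cases ha : a ∈ A
    · exact (hck a ha).le
    · simp [hk0 a ha]
  have hw3 : ∀ b ∈ B, 3 ≤ ∑ a ∈ nb G b, (3 - k a) := by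
    intro b hb
    calc 3 ≤ (nb G b).card := (memB b).1 hb
      _ = ∑ a ∈ nb G b, 1 := Finset.card_eq_sum_ones _
      _ ≤ _ := Finset.sum_le_sum (fun a ha => by have := hkle a (hadj b hb a ha); omega)
  have hws : ∀ b ∈ B, ∑ a ∈ nb G b, (3 - k a) ≤ 2 * s := by
    intro b hb
    calc ∑ a ∈ nb G b, (3 - k a) ≤ ∑ a ∈ nb G b, 2 :=
          Finset.sum_le_sum (fun a ha => by have := hkpos a (hadj b hb a ha); omega)
      _ = 2 * (nb G b).card := by rw [Finset.sum_const, smul_eq_mul, mul_comm]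
      _ ≤ 2 * s := by
        have := (memB b).1 hb
        rcases hG b with h | h
        · rw [h] at this; simp at this
        · omega
  have hsum : ∑ b ∈ B, ∑ a ∈ nb G b, (3 - k a) = 2 * A.card := by
    have e : ∑ b ∈ B, ∑ a ∈ nb G b, (3 - k a) =
        ∑ a ∈ A, ∑ b ∈ B.filter (fun b => a ∈ nb G b), (3 - k a) := by
      apply Finset.sum_comm'
      intro x y
      simp only [Finset.mem_filter]
      constructor
      · rintro ⟨h1, h2⟩; exact ⟨⟨h1, h2⟩, hadj x h1 y h2⟩
      · rintro ⟨h1, _⟩; exact h1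
    rw [e, mul_comm, ← smul_eq_mul, ← Finset.sum_const]
    apply Finset.sum_congr rfl
    intro a ha
    rw [Finset.sum_const, smul_eq_mul, mul_comm]
    exact hck a ha
  obtain ⟨Gd, f, g, hGd, hcard, hfg, hinj⟩ := hall B (nb G) (fun a => 3 - k a) hw3 hc
  have hnAB : ∀ x ∈ A, x ∉ B := by
    intro x hx hx'
    rw [memA] at hx; rw [memB] at hx'; omega
  have hfA : ∀ b ∈ Gd, f b ∈ A := fun b hb => hadj b (hGd hb) _ (hfg b hb).1
  have hgA : ∀ b ∈ Gd, g b ∈ A := fun b hb => hadj b (hGd hb) _ (hfg b hb).2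
  refine ⟨Gd.toList.map (fun b => (f b, b, g b)), ⟨?_, ?_⟩, ?_⟩
  · intro t ht
    simp only [List.mem_map, Finset.mem_toList] at ht
    obtain ⟨b, hb, rfl⟩ := ht
    have := hfg b hb
    simp only [mem_nb] at this
    exact ⟨this.1.symm, this.2⟩
  · have e : flat (Gd.toList.map (fun b => (f b, b, g b))) =
        Gd.toList.flatMap (fun b => [f b, b, g b]) := by
      simp [flat, List.flatMap_map]
    rw [e, List.nodup_flatMap]
    have key : ∀ b ∈ Gd, ∀ b' ∈ Gd, f b ≠ b' ∧ g b ≠ b' := by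
      intro b hb b' hb'
      constructor
      · intro h; exact hnAB _ (hfA b hb) (h ▸ hGd hb')
      · intro h; exact hnAB _ (hgA b hb) (h ▸ hGd hb')
    constructor
    · intro b hb
      rw [Finset.mem_toList] at hb
      have := key b hb b hb
      have h3 := (hinj b hb b hb).1
      simp [this.1, h3, this.2.symm]
    · refine (Finset.nodup_toList Gd).imp_of_mem ?_
      intro b b' hb hb' hne
      rw [Finset.mem_toList] at hb hb'
      have k1 := key b hb b' hb'
      have k2 := key b' hb' b hb
      have i1 := hinj b hb b' hb'
      have i2 := hinj b' hb' b hb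
      simp only [Function.onFun]
      intro x hx hx'
      simp only [List.mem_cons, List.not_mem_nil, or_false] at hx hx'
      rcases hx with rfl | rfl | rfl <;> rcases hx' with h | h | h
      · exact hne (i1.2.1 h)
      · exact k1.1 h
      · exact i1.1 h
      · exact k2.1 h.symm
      · exact hne h
      · exact k2.2 h.symm
      · exact i2.1 h.symm
      · exact k1.2 h
      · exact hne (i1.2.2 h)
  · have hAB : (Finset.univ.filter (fun v => nb G v ≠ ∅)).card ≤ A.card + B.card := by
      refine le_trans (Finset.card_le_card ?_) (Finset.card_union_le A B)
      intro v hv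
      simp only [Finset.mem_filter, Finset.mem_univ, true_and] at hv
      rw [Finset.mem_union, memA, memB]
      rcases hG v with h | h
      · exact absurd h hv
      · omega
    have hbd : ∑ b ∈ B, ((∑ a ∈ nb G b, (3 - k a) + 2) +
        (s + 1) * (if ∑ a ∈ nb G b, (3 - k a) = 3 then 1 else 0)) ≤ ∑ b ∈ B, 2 * (s + 1) := by
      apply Finset.sum_le_sum
      intro b hb
      have := hws b hb
      split_ifs with h
      · rw [h]; omega
      · omega
    rw [Finset.sum_add_distrib, Finset.sum_add_distrib, hsum, ← Finset.mul_sum,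
      ← Finset.card_filter, Finset.sum_const, Finset.sum_const, smul_eq_mul, smul_eq_mul] at hbd
    simp only [List.length_map, Finset.length_toList]
    refine hAB.trans ?_
    have := Nat.mul_le_mul_left (s + 1) hcard
    nlinarith

open Classical in
theorem core {V : Type} [Fintype V] (s : ℕ) (hs : 4 ≤ s) (G : SimpleGraph V) :
    (∀ v, nb G v = ∅ ∨ (2 ≤ (nb G v).card ∧ (nb G v).card ≤ s)) →
    ∃ L, Pack G L ∧ (Finset.univ.filter (fun v => nb G v ≠ ∅)).card ≤ (s + 1) * L.length := by
  induction G using WellFoundedLT.induction with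
  | _ G ih =>
  intro hG
  by_cases h1 : ∀ u v, G.Adj u v → 3 ≤ (nb G u).card → 3 ≤ (nb G v).card → False
  swap
  · push Not at h1
    obtain ⟨u, v, huv, hu, hv, -⟩ := h1
    let G' : SimpleGraph V :=
      { Adj := fun x y => G.Adj x y ∧ ¬ (x = u ∧ y = v) ∧ ¬ (x = v ∧ y = u)
        symm := ⟨fun x y h => ⟨h.1.symm, fun h' => h.2.2 ⟨h'.2, h'.1⟩, fun h' => h.2.1 ⟨h'.2, h'.1⟩⟩⟩
        loopless := ⟨fun x h => G.loopless.irrefl x h.1⟩ }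
    have hle : G' ≤ G := fun x y h => h.1
    have hlt : G' < G := by
      refine lt_of_le_of_ne hle ?_
      intro h
      have : G'.Adj u v := by rw [h]; exact huv
      exact this.2.1 ⟨rfl, rfl⟩
    have hsub : ∀ x, nb G' x ⊆ nb G x := by
      intro x y; simp only [mem_nb]; exact fun h => h.1
    have hne : u ≠ v := huv.ne
    have eu : nb G' u = (nb G u).erase v := by
      ext y; simp only [Finset.mem_erase, mem_nb, G']; tauto
    have ev : nb G' v = (nb G v).erase u := by
      ext y; simp only [Finset.mem_erase, mem_nb, G']; tauto
    have eo : ∀ x, x ≠ u → x ≠ v → nb G' x = nb G x := by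
      intro x h h'
      ext y; simp only [mem_nb, G']; tauto
    have cu : (nb G' u).card + 1 = (nb G u).card := by
      rw [eu]; exact Finset.card_erase_add_one ((mem_nb _ _ _).2 huv)
    have cv : (nb G' v).card + 1 = (nb G v).card := by
      rw [ev]; exact Finset.card_erase_add_one ((mem_nb _ _ _).2 huv.symm)
    have hbig : ∀ x, 3 ≤ (nb G x).card → (nb G x).card ≤ s := by
      intro x hx
      rcases hG x with h | h
      · rw [h] at hx; simp at hx
      · exact h.2
    have hbu := hbig u hu
    have hbv := hbig v hv
    obtain ⟨L, hL, hc⟩ := ih G' hlt (by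
      intro x
      by_cases hxu : x = u
      · subst hxu; right; omega
      by_cases hxv : x = v
      · subst hxv; right; omega
      rw [eo x hxu hxv]; exact hG x)
    refine ⟨L, ⟨fun t ht => ⟨(hL.1 t ht).1.1, (hL.1 t ht).2.1⟩, hL.2⟩, le_trans (Finset.card_le_card ?_) hc⟩
    intro x hx
    simp only [Finset.mem_filter, Finset.mem_univ, true_and] at hx ⊢
    by_cases hxu : x = u
    · subst hxu; intro h; rw [h, Finset.card_empty] at cu; omega
    by_cases hxv : x = v
    · subst hxv; intro h; rw [h, Finset.card_empty] at cv; omega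
    rw [eo x hxu hxv]; exact hx
  by_cases h2 : ∀ y, (nb G y).card = 2 → ∃ x, G.Adj y x ∧ 3 ≤ (nb G x).card
  · exact base s hs G hG h1 h2
  push Not at h2
  obtain ⟨y, hy, hyn⟩ := h2
  obtain ⟨x, z, hxz, hyxz⟩ := Finset.card_eq_two.1 hy
  have hyx : G.Adj y x := by rw [← mem_nb, hyxz]; simp
  have hyz : G.Adj y z := by rw [← mem_nb, hyxz]; simp
  have huniq : ∀ a, G.Adj y a → ∀ u u', u ≠ y → u' ≠ y → G.Adj a u → G.Adj a u' → u = u' := by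
    intro a ha u u' hu hu' h h'
    by_contra hne
    have hlt := hyn a ha
    have : ({y, u, u'} : Finset V) ⊆ nb G a := by
      intro w hw
      simp only [Finset.mem_insert, Finset.mem_singleton] at hw
      rw [mem_nb]
      rcases hw with rfl | rfl | rfl
      · exact ha.symm
      · exact h
      · exact h'
    have := Finset.card_le_card this
    rw [Finset.card_eq_three.2 ⟨y, u, u', hu.symm, hu'.symm, hne, rfl⟩] at this
    omega
  have hgood : Good G x [y] z := by
    constructor
    · simp [hyx.symm, hyz]
    · simp [hyx.ne', hyz.ne, hxz]
    · intro v hv u hvu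
      simp at hv; subst hv
      rw [← mem_nb, hyxz] at hvu
      simp at hvu ⊢; tauto
    · intro u u' hu hu'
      exact huniq x hyx u u' (by rintro rfl; simp at hu) (by rintro rfl; simp at hu')
    · intro u u' hu hu'
      exact huniq z hyz u u' (by rintro rfl; simp at hu) (by rintro rfl; simp at hu')
  obtain ⟨p, hpc, hpn, hp3, hpo⟩ := grow G (fun v => (hG v).imp id And.left) _ x [y] z rfl hgood (by simp)
  obtain ⟨a0, b0, hab0, ha0⟩ : ∃ a b, G.Adj a b ∧ a ∈ p := by
    match p, hp3, hpc with
    | a :: b :: r, _, hpc => exact ⟨a, b, (List.isChain_cons_cons.1 hpc).1, by simp⟩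
  let G' : SimpleGraph V :=
    { Adj := fun x y => G.Adj x y ∧ x ∉ p ∧ y ∉ p
      symm := ⟨fun x y h => ⟨h.1.symm, h.2.2, h.2.1⟩⟩
      loopless := ⟨fun x h => G.loopless.irrefl x h.1⟩ }
  have hle : G' ≤ G := fun x y h => h.1
  have hlt : G' < G := by
    refine lt_of_le_of_ne hle ?_
    intro h
    have : G'.Adj a0 b0 := by rw [h]; exact hab0
    exact this.2.1 ha0
  have ein : ∀ x ∈ p, nb G' x = ∅ := by
    intro x hx
    rw [Finset.eq_empty_iff_forall_notMem]
    intro w hw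
    rw [mem_nb] at hw
    exact hw.2.1 hx
  have eout : ∀ x, x ∉ p → nb G' x = (nb G x).filter (fun w => w ∉ p) := by
    intro x hx
    ext w; simp only [mem_nb, Finset.mem_filter, G']; tauto
  obtain ⟨L, hL, hc⟩ := ih G' hlt (by
    intro x
    by_cases hx : x ∈ p
    · left; exact ein x hx
    · rw [eout x hx]
      rcases hpo x hx with h | h
      · left; rw [h]; simp
      · right
        refine ⟨h, ?_⟩
        rcases hG x with h' | h'
        · rw [h'] at h; simp at h
        · exact (Finset.card_filter_le _ _).trans h'.2)
  obtain ⟨M, hM, hMp, hMl⟩ := path_pack G p hpc hpn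
  refine ⟨L ++ M, ⟨?_, ?_⟩, ?_⟩
  · intro t ht
    rcases List.mem_append.1 ht with ht | ht
    · exact ⟨(hL.1 t ht).1.1, (hL.1 t ht).2.1⟩
    · exact hM.1 t ht
  · have e : flat (L ++ M) = flat L ++ flat M := by simp [flat]
    rw [e, List.nodup_append']
    refine ⟨hL.2, hM.2, ?_⟩
    intro a ha ha'
    have hap := hMp a ha'
    simp only [flat, List.mem_flatMap, List.mem_cons, List.not_mem_nil, or_false] at ha
    obtain ⟨t, ht, h⟩ := ha
    have := hL.1 t ht
    rcases h with rfl | rfl | rfl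
    · exact this.1.2.1 hap
    · exact this.1.2.2 hap
    · exact this.2.2.2 hap
  · have hsub : (Finset.univ.filter (fun v => nb G v ≠ ∅)) ⊆
        (Finset.univ.filter (fun v => nb G' v ≠ ∅)) ∪ p.toFinset := by
      intro v hv
      simp only [Finset.mem_filter, Finset.mem_univ, true_and, Finset.mem_union,
        List.mem_toFinset] at hv ⊢
      by_cases hvp : v ∈ p
      · right; exact hvp
      · left
        rw [eout v hvp]
        rcases hpo v hvp with h | h
        · exact absurd h hv
        · intro h'; rw [h'] at h; simp at h
    have h3 := (Finset.card_le_card hsub).trans (Finset.card_union_le _ _)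
    rw [List.toFinset_card_of_nodup hpn] at h3
    have h4 : p.length ≤ 5 * M.length := by omega
    have h5 : 5 * M.length ≤ (s + 1) * M.length := Nat.mul_le_mul_right _ (by omega)
    rw [List.length_append, Nat.mul_add]
    omega

end PP

namespace PP
open Classical in
theorem lambda_ge {V : Type} [Fintype V] (G : SimpleGraph V) (L : List (V × V × V))
    (hL : Pack G L) : L.length ≤ G.lambdaK 2 := by
  have hex : ∀ t : V × V × V, ∃ H : G.Subgraph, t ∈ L →
      (H.IsKEdgePath 2 ∧ H.verts = {t.1, t.2.1, t.2.2}) := by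
    rintro ⟨a, b, c⟩
    by_cases ht : (a, b, c) ∈ L
    · have h := hL.1 _ ht
      have hn := (List.nodup_flatMap.1 hL.2).1 _ ht
      simp only [List.nodup_cons, List.mem_cons, List.not_mem_nil, or_false, not_or] at hn
      refine ⟨(SimpleGraph.Walk.cons h.1 (SimpleGraph.Walk.cons h.2 SimpleGraph.Walk.nil)).toSubgraph,
        fun _ => ⟨⟨_, _, _, ?_, ?_, rfl⟩, ?_⟩⟩
      · rw [SimpleGraph.Walk.isPath_def]
        simp
        tauto
      · simp
      · ext x
        simp
        tauto
    · exact ⟨⊥, fun h => absurd h ht⟩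
  choose Φ hΦ using hex
  have hpw := (List.nodup_flatMap.1 hL.2).2
  have hdis : L.Pairwise (fun t t' => Disjoint (Φ t).verts (Φ t').verts) := by
    refine hpw.imp_of_mem ?_
    intro t t' ht ht' hd
    rw [(hΦ t ht).2, (hΦ t' ht').2, Set.disjoint_left]
    intro x hx hx'
    apply hd (a := x)
    · simpa using hx
    · simpa using hx'
  have hnd : (L.map Φ).Nodup := by
    rw [List.Nodup, List.pairwise_map]
    refine hdis.imp_of_mem ?_
    intro t t' ht ht' hd he
    rw [← he, (hΦ t ht).2] at hd
    exact Set.disjoint_left.1 hd (Set.mem_insert _ _) (Set.mem_insert _ _)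
  have hdis2 : (L.map Φ).Pairwise (fun H H' => Disjoint H.verts H'.verts) := by
    rw [List.pairwise_map]; exact hdis
  have : Finite G.Subgraph := inferInstance
  have : Fintype G.Subgraph := Fintype.ofFinite _
  unfold SimpleGraph.lambdaK
  apply le_csSup
  · refine ⟨Fintype.card G.Subgraph, ?_⟩
    rintro n ⟨P, -, -, rfl⟩
    exact Finset.card_le_univ P
  · refine ⟨(L.map Φ).toFinset, ?_, ?_, ?_⟩
    · intro H hH
      simp only [List.mem_toFinset, List.mem_map] at hH
      obtain ⟨t, ht, rfl⟩ := hH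
      exact (hΦ t ht).1
    · intro H hH H' hH' hne
      simp only [List.coe_toFinset, Set.mem_ofPred_eq] at hH hH'
      have : Std.Symm (fun H H' : G.Subgraph => Disjoint H.verts H'.verts) :=
        ⟨fun _ _ h => h.symm⟩
      exact hdis2.forall hH hH' hne
    · rw [List.toFinset_card_of_nodup hnd, List.length_map]
end PP

/-- Let `s ≥ 4` and let `G` be a finite simple graph in which every vertex has
degree at least 2 and at most `s`. Then `λ(G) ≥ v(G)/(s+1)`. -/
theorem stmt_1 {V : Type} [Fintype V] (s : ℕ) (hs : 4 ≤ s)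
    (G : SimpleGraph V) [DecidableRel G.Adj]
    (hdeg : ∀ v : V, 2 ≤ G.degree v ∧ G.degree v ≤ s) :
    (G.lambdaK 2 : ℚ) ≥ (Fintype.card V : ℚ) / (s + 1) := by
  classical
  have hd : ∀ v, (PP.nb G v).card = G.degree v := by
    intro v
    rw [← SimpleGraph.card_neighborFinset_eq_degree]
    congr 1
    ext w
    rw [PP.mem_nb, SimpleGraph.mem_neighborFinset]
  obtain ⟨L, hL, hc⟩ := PP.core s hs G (by
    intro v; right; rw [hd v]; exact hdeg v)
  have h1 := PP.lambda_ge G L hL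
  rw [Finset.filter_true_of_mem, Finset.card_univ] at hc
  · have h2 : Fintype.card V ≤ (s + 1) * G.lambdaK 2 := hc.trans (Nat.mul_le_mul_left _ h1)
    rw [ge_iff_le, div_le_iff₀ (by positivity)]
    have h3 : (Fintype.card V : ℚ) ≤ ((s + 1) * G.lambdaK 2 : ℕ) := by exact_mod_cast h2
    push_cast at h3
    linarith
  · intro v _ h
    have := hdeg v
    rw [← hd v, h] at this
    simp at this
end
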